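/- arXiv:2601.00239 — 8 statements merged into one kernel-verified Lean document; each statement's English description precedes it below -/
import Mathlib

section
/- Let X be a random vector on ℝ^d with positive joint Lebesgue density f and suppose there is a continuous, 1-homogeneous function g : ℝ^d → [0,∞) with g(x) ≥ max_i |x_i| for all x, such that for every x ∈ ℝ^d and every family (x_t) with x_t → x as t → ∞, one has −log f(t·x_t)/t → g(x). Fix a coordinate i and a sign s ∈ {+1, −1}, and write f_{i,−i}(u, v) for f with the i-th argument listed first. Suppose there exist functions a : ℝ → ℝ^{d−1} and b : ℝ → (0,∞)^{d−1}, and a function k : (0,∞)^{d−1} → (0,∞), such that for every z ∈ (0,∞)^{d−1}, 2e^t · f_{i,−i}(s·t, a(t) + b(t)∘z) · ∏_{j≠i} b_j(t) → k(z) as t → ∞, and that a(t)/t → α ∈ [−1,1]^{d−1} as t → ∞. Then g, evaluated with s·1 in the i-th coordinate and α in the remaining coordinates, equals 1: g_{{i}∪(V∖{i})}(s·1, α) = 1. -/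
/-! Write `F t y = -log f (t y) / t`, and let `y_t = (s t, a t + b t ∘ z)` be the point at which the
conditional density is evaluated. Taking logarithms in the conditional extreme value convergence,
`t + log 2 + log f (y_t) + ∑ log b_j(t)` has a finite limit, hence it tends to `0` after division
by any scale that tends to infinity. The claim concerns constants only, so it can be proved along a
single ultrafilter `U ≤ atTop`, where bounded quantities converge without passing to subsequences.

Convergence of `F t x_t` along every family `x_t → x` amounts to joint convergence along
`atTop ×ˢ 𝓝 x` (`tendsto_prod_of_forall_tendsto`), so it may be used along `U` and with the scale
`‖y_t‖` instead of `t`.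

* If `‖b t‖ > 4 t` along `U`, then `2 t ≤ ‖y_t‖`, and scaling by `‖y_t‖` gives
  `0 = lim (t / ‖y_t‖) - g u + lim ∑ log b_j / ‖y_t‖ ≤ 1 / 2 - g u`, where `u` is the limiting
  direction; but `g u ≥ ‖u‖ = 1`. So this case does not occur (`not_large_scale`).
* Otherwise `b t / t → β` along `U`, and scaling by `t` gives
  `g (s, α + β ∘ z) - 1 = lim ∑ log b_j / t ≤ 0` (`gauge_le_one_of_scale`). Letting `z → 0` and
  using continuity of `g`, `g (s, α) ≤ 1`, while `g (s, α) ≥ |s| = 1`.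
-/

open Filter Topology MeasureTheory

/-- If `F t (x t) → L` along every family `x t → x`, then `F` converges to `L` jointly: a sequence
of bad pairs `(t n, y n)` with `t` strictly increasing extends to a family converging to `x`. -/
theorem tendsto_prod_of_forall_tendsto {E : Type*} [TopologicalSpace E]
    [FirstCountableTopology E] (F : ℝ → E → ℝ) (x : E) (L : ℝ)
    (h : ∀ xt : ℝ → E, Tendsto xt atTop (𝓝 x) → Tendsto (fun t => F t (xt t)) atTop (𝓝 L)) :
    Tendsto (fun p : ℝ × E => F p.1 p.2) (atTop ×ˢ 𝓝 x) (𝓝 L) := by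
  by_contra hcon
  rw [Filter.not_tendsto_iff_exists_frequently_notMem] at hcon
  obtain ⟨S, hS, hfr⟩ := hcon
  obtain ⟨p, hp, hpS⟩ := Filter.exists_seq_forall_of_frequently hfr
  rw [Filter.tendsto_prod_iff'] at hp
  obtain ⟨φ, hφ, hmono⟩ := Filter.strictMono_subseq_of_tendsto_atTop hp.1
  have hy : Tendsto (fun n => (p (φ n)).2) atTop (𝓝 x) := hp.2.comp hφ.tendsto_atTop
  have ht : Tendsto (fun n => (p (φ n)).1) atTop atTop := hp.1.comp hφ.tendsto_atTop
  set τ : ℕ → ℝ := fun n => (p (φ n)).1 with hτ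
  have hτm : StrictMono τ := hmono
  set xt : ℝ → E := Function.extend τ (fun n => (p (φ n)).2) (fun _ => x) with hxt
  have hxtτ : ∀ n, xt (τ n) = (p (φ n)).2 := fun n => hτm.injective.extend_apply _ _ n
  have hconv : Tendsto xt atTop (𝓝 x) := by
    refine Filter.tendsto_def.2 fun T hT => ?_
    obtain ⟨N, hN⟩ := Filter.eventually_atTop.1 (hy hT)
    filter_upwards [Filter.eventually_ge_atTop (τ N)] with t htN
    by_cases hex : ∃ n, τ n = t
    · obtain ⟨n, rfl⟩ := hex
      rw [Set.mem_preimage, hxtτ]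
      exact hN n (hτm.le_iff_le.1 htN)
    · rw [Set.mem_preimage, hxt, Function.extend_apply' _ _ _ hex]
      exact mem_of_mem_nhds hT
  obtain ⟨n, hn⟩ := (((h xt hconv).comp ht).eventually hS).exists
  exact hpS (φ n) (by rw [← hxtτ]; exact hn)

/-- The vector with `i`-th coordinate `c` and remaining coordinates `w`. -/
def glue {V : Type*} [DecidableEq V] (i : V) (c : ℝ) (w : {j : V // j ≠ i} → ℝ) : V → ℝ :=
  fun v => if h : v = i then c else w ⟨v, h⟩

section glue

variable {V : Type*} [DecidableEq V] (i : V)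

theorem glue_self (c : ℝ) (w : {j : V // j ≠ i} → ℝ) : glue i c w i = c := by
  simp [glue]

theorem glue_coe (c : ℝ) (w : {j : V // j ≠ i} → ℝ) (j : {j : V // j ≠ i}) :
    glue i c w j = w j := by
  simp [glue, j.2]

theorem smul_glue (t c : ℝ) (w : {j : V // j ≠ i} → ℝ) :
    t • glue i c w = glue i (t * c) (t • w) := by
  ext v
  by_cases h : v = i <;> simp [glue, h]

theorem continuous_glue (c : ℝ) : Continuous (glue i c) := by
  refine continuous_pi fun v => ?_
  by_cases h : v = i
  · simpa [glue, h] using continuous_const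
  · simpa [glue, h] using continuous_apply _

theorem norm_le_norm_glue [Fintype V] (c : ℝ) (w : {j : V // j ≠ i} → ℝ) :
    ‖w‖ ≤ ‖glue i c w‖ := by
  refine (pi_norm_le_iff_of_nonneg (norm_nonneg _)).2 fun j => ?_
  rw [← glue_coe i c w j]
  exact norm_le_pi_norm _ _

end glue

/-- Logarithmic corrections are negligible: if `b` is positive and at most `C` times a scale `N`
that tends to infinity, then `∑ log b_j / N` is at most a quantity tending to `0`. -/
theorem sum_log_div_le {ι W : Type*} [Fintype W] {l : Filter ι} (N : ι → ℝ) (b : ι → W → ℝ)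
    (hN : Tendsto N l atTop) (C : ℝ) (hb : ∀ t j, 0 < b t j) (hbN : ∀ᶠ t in l, ‖b t‖ ≤ C * N t) :
    ∃ r : ι → ℝ, Tendsto r l (𝓝 0) ∧ ∀ᶠ t in l, (∑ j, Real.log (b t j)) / N t ≤ r t := by
  have hlog : Tendsto (fun x : ℝ => Real.log x / x) atTop (𝓝 0) := by
    simpa using Real.isLittleO_log_id_atTop.tendsto_div_nhds_zero
  have h1 : Tendsto (fun t => (Fintype.card W : ℝ) * (Real.log C / N t + Real.log (N t) / N t)) l
      (𝓝 0) := by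
    simpa using ((hN.const_div_atTop (Real.log C)).add (hlog.comp hN)).const_mul
      (Fintype.card W : ℝ)
  refine ⟨_, h1, ?_⟩
  filter_upwards [hbN, hN.eventually_gt_atTop 0] with t ht h0
  have hj : ∀ j ∈ Finset.univ, Real.log (b t j) ≤ Real.log C + Real.log (N t) := by
    intro j _
    have hle : b t j ≤ C * N t :=
      ((le_abs_self _).trans (norm_le_pi_norm (b t) j)).trans ht
    have hC : 0 < C := pos_of_mul_pos_left ((hb t j).trans_le hle) h0.le
    rw [← Real.log_mul hC.ne' h0.ne']
    exact Real.log_le_log (hb t j) hle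
  have := Finset.sum_le_card_nsmul _ _ _ hj
  rw [← add_div, ← mul_div_assoc]
  gcongr
  rwa [Finset.card_univ, nsmul_eq_mul] at this

/-- The log form of the conditional extreme value convergence, divided by a divergent scale. -/
theorem log_div_tendsto_zero {W : Type*} [Fintype W] {l : Filter ℝ} (φ : ℝ → ℝ) (b : ℝ → W → ℝ)
    (hφ : ∀ t, 0 < φ t) (hb : ∀ t j, 0 < b t j) (c : ℝ) (hc : 0 < c)
    (h : Tendsto (fun t => 2 * Real.exp t * φ t * ∏ j, b t j) l (𝓝 c))
    (N : ℝ → ℝ) (hN : Tendsto N l atTop) :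
    Tendsto (fun t => t / N t - -Real.log (φ t) / N t + (∑ j, Real.log (b t j)) / N t) l
      (𝓝 0) := by
  have h1 := (h.log hc.ne').div_atTop hN
  have h2 := h1.sub (hN.const_div_atTop (Real.log 2))
  rw [sub_zero] at h2
  refine h2.congr fun t => ?_
  have hp : 0 < ∏ j, b t j := Finset.prod_pos fun j _ => hb t j
  have h3 := hφ t
  rw [Real.log_mul (by positivity) hp.ne', Real.log_mul (by positivity) h3.ne',
    Real.log_mul (by norm_num) (Real.exp_pos t).ne', Real.log_exp,
    Real.log_prod fun j _ => (hb t j).ne']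
  ring

/-- Along an ultrafilter on which `‖y_t‖ ≥ 2 t` and `b` is of order at most `‖y_t‖`, the density at
`y_t` is too small for the conditional convergence to a positive limit. -/
theorem not_large_scale {V W : Type*} [Fintype V] [Fintype W] [Nonempty V]
    (f g : (V → ℝ) → ℝ) (hf_pos : ∀ x, 0 < f x) (hg_max : ∀ x v, |x v| ≤ g x)
    (hgauge : ∀ x, Tendsto (fun p : ℝ × (V → ℝ) => -Real.log (f (p.1 • p.2)) / p.1)
      (atTop ×ˢ 𝓝 x) (𝓝 (g x)))
    (U : Ultrafilter ℝ) (hU : (U : Filter ℝ) ≤ atTop)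
    (b : ℝ → W → ℝ) (hb : ∀ t j, 0 < b t j) (y : ℝ → V → ℝ) (c : ℝ) (hc : 0 < c)
    (h : Tendsto (fun t => 2 * Real.exp t * f (y t) * ∏ j, b t j) U (𝓝 c))
    (hy : ∀ᶠ t in (U : Filter ℝ), 2 * t ≤ ‖y t‖)
    (C : ℝ) (hby : ∀ᶠ t in (U : Filter ℝ), ‖b t‖ ≤ C * ‖y t‖) : False := by
  have hid : Tendsto (fun t : ℝ => t) U atTop := hU
  have hN : Tendsto (fun t => ‖y t‖) U atTop :=
    tendsto_atTop_mono' _ hy (hid.const_mul_atTop two_pos)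
  have hsph : ∀ᶠ t in (U : Filter ℝ), ‖y t‖⁻¹ • y t ∈ Metric.sphere (0 : V → ℝ) 1 := by
    filter_upwards [hN.eventually_gt_atTop 0] with t ht
    rw [mem_sphere_zero_iff_norm, norm_smul, norm_inv, norm_norm, inv_mul_cancel₀ ht.ne']
  obtain ⟨u, hu, hlim⟩ := (isCompact_sphere (0 : V → ℝ) 1).ultrafilter_le_nhds
    (U.map fun t => ‖y t‖⁻¹ • y t) (Filter.le_principal_iff.2 hsph)
  have hlim' : Tendsto (fun t => ‖y t‖⁻¹ • y t) U (𝓝 u) := hlim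
  have hgu : 1 ≤ g u := by
    rw [← mem_sphere_zero_iff_norm.1 hu]
    refine (pi_norm_le_iff_of_nonempty _).2 fun v => hg_max u v
  have hF : Tendsto (fun t => -Real.log (f (y t)) / ‖y t‖) U (𝓝 (g u)) := by
    refine ((hgauge u).comp (hN.prodMk hlim')).congr' ?_
    filter_upwards [hN.eventually_gt_atTop 0] with t ht
    simp [smul_smul, mul_inv_cancel₀ ht.ne']
  obtain ⟨r, hr, hle⟩ := sum_log_div_le (fun t => ‖y t‖) b hN C hb hby
  have h0 := log_div_tendsto_zero (fun t => f (y t)) b (fun t => hf_pos _) hb c hc h _ hN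
  have hup : Tendsto (fun t => 1 / 2 - -Real.log (f (y t)) / ‖y t‖ + r t) U
      (𝓝 (1 / 2 - g u + 0)) := (tendsto_const_nhds.sub hF).add hr
  have := le_of_tendsto_of_tendsto h0 hup (by
    filter_upwards [hle, hy, hN.eventually_gt_atTop 0] with t h1 h2 h3
    have : t / ‖y t‖ ≤ 1 / 2 := by
      rw [div_le_div_iff₀ h3 two_pos]; linarith
    linarith)
  linarith

/-- If `b` is of order at most `t` and `x_t → x`, then conditional convergence at `t x_t` forces
`g x ≤ 1`. -/
theorem gauge_le_one_of_scale {E W : Type*} [TopologicalSpace E] [SMul ℝ E] [Fintype W]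
    (f g : E → ℝ) (hf_pos : ∀ x, 0 < f x)
    (hgauge : ∀ x, Tendsto (fun p : ℝ × E => -Real.log (f (p.1 • p.2)) / p.1)
      (atTop ×ˢ 𝓝 x) (𝓝 (g x)))
    (l : Filter ℝ) [l.NeBot] (hl : l ≤ atTop)
    (b : ℝ → W → ℝ) (hb : ∀ t j, 0 < b t j) (xt : ℝ → E) (x : E) (hx : Tendsto xt l (𝓝 x))
    (c : ℝ) (hc : 0 < c)
    (h : Tendsto (fun t => 2 * Real.exp t * f (t • xt t) * ∏ j, b t j) l (𝓝 c))
    (C : ℝ) (hbt : ∀ᶠ t in l, ‖b t‖ ≤ C * t) : g x ≤ 1 := by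
  have hid : Tendsto (fun t : ℝ => t) l atTop := hl
  have hF : Tendsto (fun t => -Real.log (f (t • xt t)) / t) l (𝓝 (g x)) :=
    (hgauge x).comp (hid.prodMk hx)
  obtain ⟨r, hr, hle⟩ := sum_log_div_le (fun t => t) b hid C hb hbt
  have h0 := log_div_tendsto_zero (fun t => f (t • xt t)) b (fun t => hf_pos _) hb c hc h _ hid
  have hup : Tendsto (fun t => 1 - -Real.log (f (t • xt t)) / t + r t) l
      (𝓝 (1 - g x + 0)) := (tendsto_const_nhds.sub hF).add hr
  have := le_of_tendsto_of_tendsto h0 hup (by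
    filter_upwards [hle, hid.eventually_gt_atTop 0] with t h1 h2
    rw [div_self h2.ne']
    linarith)
  linarith

/-- **Proposition 4(i)** (Laplace margins): under the limit-set (gauge) density convergence
and the conditional extreme value density convergence for conditioning on coordinate `i`
being large of sign `s ∈ {+1, -1}`, the gauge function evaluated with `s·1` in the `i`-th
coordinate and the limiting location coefficients `α` in the remaining coordinates
equals `1`. -/
theorem stmt_1
    {V : Type*} [Fintype V] [DecidableEq V] [Nonempty V]
    (f : (V → ℝ) → ℝ) (g : (V → ℝ) → ℝ)
    (μ : Measure (V → ℝ)) [IsProbabilityMeasure μ]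
    (hμ : μ = volume.withDensity (fun x => ENNReal.ofReal (f x)))
    (hf_pos : ∀ x : V → ℝ, 0 < f x)
    (hg_cont : Continuous g)
    (hg_nonneg : ∀ x : V → ℝ, 0 ≤ g x)
    (hg_hom : ∀ t : ℝ, 0 ≤ t → ∀ x : V → ℝ, g (t • x) = t * g x)
    (hg_max : ∀ x : V → ℝ, ∀ v, |x v| ≤ g x)
    (hgauge : ∀ x : V → ℝ, ∀ xt : ℝ → V → ℝ, Tendsto xt atTop (𝓝 x) →
        Tendsto (fun t => -Real.log (f (t • xt t)) / t) atTop (𝓝 (g x)))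
    (i : V) (s : ℝ) (hs : s = 1 ∨ s = -1)
    (a b : ℝ → {j : V // j ≠ i} → ℝ)
    (hb : ∀ t j, 0 < b t j)
    (k : ({j : V // j ≠ i} → ℝ) → ℝ)
    (hk : ∀ z : {j : V // j ≠ i} → ℝ, (∀ j, 0 < z j) → 0 < k z)
    (hCE : ∀ z : {j : V // j ≠ i} → ℝ, (∀ j, 0 < z j) →
      Tendsto (fun t => 2 * Real.exp t *
          f (fun v => if h : v = i then s * t else a t ⟨v, h⟩ + b t ⟨v, h⟩ * z ⟨v, h⟩) *
          ∏ j, b t j) atTop (𝓝 (k z)))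
    (α : {j : V // j ≠ i} → ℝ)
    (hα_mem : ∀ j, α j ∈ Set.Icc (-1:ℝ) 1)
    (hα : ∀ j, Tendsto (fun t => a t j / t) atTop (𝓝 (α j))) :
    g (fun v => if h : v = i then s else α ⟨v, h⟩) = 1 := by
  have hjoint : ∀ x, Tendsto (fun p : ℝ × (V → ℝ) => -Real.log (f (p.1 • p.2)) / p.1)
      (atTop ×ˢ 𝓝 x) (𝓝 (g x)) := fun x =>
    tendsto_prod_of_forall_tendsto (fun t y => -Real.log (f (t • y)) / t) x (g x) (hgauge x)
  have hCE' : ∀ z : {j : V // j ≠ i} → ℝ, (∀ j, 0 < z j) →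
      Tendsto (fun t => 2 * Real.exp t * f (glue i (s * t) (a t + b t * z)) * ∏ j, b t j)
        atTop (𝓝 (k z)) := hCE
  change g (glue i s α) = 1
  have habs : |s| = 1 := by rcases hs with rfl | rfl <;> simp
  refine le_antisymm ?_ (by
    simpa [glue_self, habs] using hg_max (glue i s α) i)
  have hα' : Tendsto (fun t => t⁻¹ • a t) atTop (𝓝 α) := by
    refine tendsto_pi_nhds.2 fun j => ?_
    simpa [div_eq_inv_mul] using hα j
  have hα_norm : ‖α‖ ≤ 1 :=
    (pi_norm_le_iff_of_nonneg zero_le_one).2 fun j => abs_le.2 (hα_mem j)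
  have ha : ∀ᶠ t in atTop, ‖a t‖ ≤ 3 / 2 * t := by
    filter_upwards [hα'.norm.eventually (gt_mem_nhds (show ‖α‖ < 3 / 2 by linarith)),
      eventually_gt_atTop (0 : ℝ)] with t h1 h2
    rw [norm_smul, norm_inv, Real.norm_of_nonneg h2.le, inv_mul_lt_iff₀ h2] at h1
    linarith
  set U : Ultrafilter ℝ := Ultrafilter.of atTop
  have hU : (U : Filter ℝ) ≤ atTop := Ultrafilter.of_le atTop
  have hb_small : ∀ᶠ t in (U : Filter ℝ), ‖b t‖ ≤ 4 * t := by
    by_contra hcon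
    rw [← Ultrafilter.eventually_not] at hcon
    have hlow : ∀ᶠ t in (U : Filter ℝ), 0 < t ∧ 4 * t < ‖b t‖ ∧
        ‖b t‖ - 3 / 2 * t ≤ ‖glue i (s * t) (a t + b t * 1)‖ := by
      filter_upwards [hcon, hU ha, hU (eventually_gt_atTop 0)] with t h1 h2 h3
      refine ⟨h3, not_le.1 h1, ?_⟩
      have h4 := norm_le_norm_glue i (s * t) (a t + b t * 1)
      have h5 := norm_sub_le (a t + b t) (a t)
      rw [mul_one] at h4 ⊢
      rw [add_sub_cancel_left] at h5
      have h2' : ‖a t‖ ≤ 3 / 2 * t := h2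
      linarith
    refine not_large_scale f g hf_pos hg_max hjoint U hU b hb _ (k 1) (hk 1 fun _ => one_pos)
      ((hCE' 1 fun _ => one_pos).mono_left hU) ?_ 2 ?_
    · filter_upwards [hlow] with t ⟨h1, h2, h3⟩
      linarith
    · filter_upwards [hlow] with t ⟨h1, h2, h3⟩
      linarith
  have hball : ∀ᶠ t in (U : Filter ℝ),
      t⁻¹ • b t ∈ Metric.closedBall (0 : {j : V // j ≠ i} → ℝ) 4 := by
    filter_upwards [hb_small, hU (eventually_gt_atTop 0)] with t h1 h2
    have h2' : 0 < t := h2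
    rw [mem_closedBall_zero_iff, norm_smul, norm_inv, Real.norm_of_nonneg h2'.le,
      inv_mul_le_iff₀ h2']
    linarith
  obtain ⟨β, -, hβ⟩ := (isCompact_closedBall (0 : {j : V // j ≠ i} → ℝ) 4).ultrafilter_le_nhds
    (U.map fun t => t⁻¹ • b t) (Filter.le_principal_iff.2 hball)
  have hβ' : Tendsto (fun t => t⁻¹ • b t) U (𝓝 β) := hβ
  have key : ∀ z : {j : V // j ≠ i} → ℝ, (∀ j, 0 < z j) → g (glue i s (α + β * z)) ≤ 1 := by
    intro z hz
    refine gauge_le_one_of_scale f g hf_pos hjoint U hU b hb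
      (fun t => glue i s (t⁻¹ • a t + t⁻¹ • b t * z)) _ ?_ (k z) (hk z hz) ?_ 4 hb_small
    · exact ((continuous_glue i s).tendsto _).comp
        ((hα'.mono_left hU).add (hβ'.mul tendsto_const_nhds))
    · refine ((hCE' z hz).mono_left hU).congr' ?_
      filter_upwards [hU (eventually_gt_atTop 0)] with t ht
      have ht' : 0 < t := ht
      rw [smul_glue, mul_comm t s, smul_add, ← smul_mul_assoc, smul_inv_smul₀ ht'.ne',
        smul_inv_smul₀ ht'.ne']
  -- Let `z = (ε, …, ε)` with `ε ↓ 0`.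
  have hcont : Continuous fun ε : ℝ => g (glue i s (α + β * fun _ => ε)) :=
    hg_cont.comp ((continuous_glue i s).comp (by fun_prop))
  have hlim := (hcont.tendsto 0).mono_left (nhdsWithin_le_nhds (s := Set.Ioi 0))
  have h0 : α + β * (fun _ => (0 : ℝ)) = α := by ext; simp
  rw [h0] at hlim
  exact le_of_tendsto hlim (eventually_mem_nhdsWithin.mono fun ε hε => key _ fun _ => hε)
end

section
/- Let g be the gauge function of a block geometric extremal graphical model on a block graph G = (V, E) in exponential margins. Assume that for every vertex i ∈ V there exists a vector α_{V∖{i}|i} = (α_{j|i})_{j≠i} ∈ [0,1]^{V∖{i}} such that: (a) g, evaluated with 1 in coordinate i and α_{V∖{i}|i} in the remaining coordinates, equals 1; and (b) for each j ≠ i, α_{j|i} is the largest α ∈ [0,1] with g_{{i,j}}(1, α) = 1, where g_{{i,j}} is the bivariate marginal gauge. Then for any two distinct vertices i and j, letting {i = v_0, v_1, …, v_{m} = j} denote the vertices along the unique shortest path of length m ≥ 1 from i to j in G, one has α_{j|i} = ∏_{k=1}^{m} α_{v_k|v_{k−1}}. -/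
open Filter Topology

/-!
The proof rests on two facts about the block structure.

* *The gauge dominates every coordinate.* Re-rooting the clique tree at a vertex `a` replaces the
  separators by vertices `p k ∈ C k`, one for each clique, such that
  `x a + ∑ x (D k) = ∑ x (p k)` (`exists_reroot`).  Hence `g x - x a = ∑ (gC k x - x (p k)) ≥ 0`.
* *Interior vertices of a shortest path are cut vertices.* For a vertex `u` of a clique `C k` there
  is a set `B` of vertices, the branch hanging off `u` through `C k`, such that every clique lies
  in `B ∪ {u}` or misses `B` (`exists_branch`).

If `x` and `y` agree at `u`, swapping them on `B` yields two vectors `z₁`, `z₂`, and since every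
clique sees only one side of the cut, `g z₁ + g z₂ = g x + g y` (`gauge_swap`).
Take `x = (1, α_{·|i})` and `y = α_{u|i} • (1, α_{·|u})`, where `u` separates `i` from `j`.  Then
`g x + g y = 1 + α_{u|i}`, while `g z₁ ≥ z₁ i = 1` and `g z₂ ≥ z₂ u = α_{u|i}`, so both are
equalities.  The vector `z₁` witnesses `α_{u|i} α_{j|u} ≤ α_{j|i}`, and `z₂`, rescaled by
`α_{u|i}`, witnesses the reverse inequality.  This gives `α_{j|i} = α_{u|i} α_{j|u}`
(`alpha_mul_of_cut`), and the product formula follows by induction along the path.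
-/

/-- Re-rooting of the clique tree at the vertex `a`: `p k` is the vertex of `C k` closest to `a`. -/
lemma exists_reroot {V : Type*} [DecidableEq V] (C : ℕ → Finset V) (D : ℕ → V) (n : ℕ)
    (hRIP : ∀ k, 2 ≤ k → k ≤ n → C k ∩ (Finset.Icc 1 (k-1)).biUnion C = {D k})
    (a : V) (ha : ∃ k, 1 ≤ k ∧ k ≤ n ∧ a ∈ C k) :
    ∃ p : ℕ → V, (∀ k, 1 ≤ k → k ≤ n → p k ∈ C k) ∧
      ∀ x : V → ℝ, x a + ∑ k ∈ Finset.Icc 2 n, x (D k) = ∑ k ∈ Finset.Icc 1 n, x (p k) := by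
  induction n generalizing a with
  | zero => obtain ⟨k, h1, h2, -⟩ := ha; omega
  | succ n ih =>
    obtain rfl | hn := Nat.eq_zero_or_pos n
    · obtain ⟨k, h1, h2, h3⟩ := ha
      obtain rfl : k = 1 := by omega
      refine ⟨fun _ => a, fun k h1 h2 => ?_, fun x => by simp⟩
      obtain rfl : k = 1 := by omega
      exact h3
    have ih' := ih fun k h1 h2 => hRIP k h1 (by omega)
    have hD : D (n+1) ∈ C (n+1) ∩ (Finset.Icc 1 (n+1-1)).biUnion C := by
      rw [hRIP (n+1) (by omega) le_rfl]; simp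
    simp only [Finset.mem_inter, Finset.mem_biUnion, Finset.mem_Icc, Nat.add_sub_cancel] at hD
    obtain ⟨hD1, l, ⟨hl1, hl2⟩, hl3⟩ := hD
    -- The new clique is attached at `q`, and its own representative is `c`.
    have key : ∀ q c : V, (∃ k, 1 ≤ k ∧ k ≤ n ∧ q ∈ C k) → c ∈ C (n+1) →
        (∀ x : V → ℝ, x q + x c = x a + x (D (n+1))) →
        ∃ p : ℕ → V, (∀ k, 1 ≤ k → k ≤ n+1 → p k ∈ C k) ∧
          ∀ x : V → ℝ, x a + ∑ k ∈ Finset.Icc 2 (n+1), x (D k)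
            = ∑ k ∈ Finset.Icc 1 (n+1), x (p k) := by
      intro q c hq hc hqc
      obtain ⟨p, hp, hs⟩ := ih' q hq
      refine ⟨fun k => if k = n+1 then c else p k, fun k h1 h2 => ?_, fun x => ?_⟩
      · dsimp only
        split_ifs with h
        · exact h ▸ hc
        · exact hp k h1 (by omega)
      · rw [Finset.sum_Icc_succ_top (by omega), Finset.sum_Icc_succ_top (by omega)]
        have : ∑ k ∈ Finset.Icc 1 n, x (if k = n+1 then c else p k)
            = ∑ k ∈ Finset.Icc 1 n, x (p k) := by
          refine Finset.sum_congr rfl fun k hk => ?_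
          rw [Finset.mem_Icc] at hk
          rw [if_neg (by omega)]
        dsimp only
        rw [this, ← hs x, if_pos rfl]
        linarith [hqc x]
    by_cases hU : ∃ k, 1 ≤ k ∧ k ≤ n ∧ a ∈ C k
    · exact key a (D (n+1)) hU hD1 fun x => rfl
    · refine key (D (n+1)) a ⟨l, hl1, hl2, hl3⟩ ?_ fun x => add_comm _ _
      obtain ⟨k, h1, h2, h3⟩ := ha
      obtain h | rfl : k ≤ n ∨ k = n+1 := by omega
      · exact absurd ⟨k, h1, h, h3⟩ hU
      · exact h3

/-- The branch `B` hanging off `u` through the clique `C k`: a union of components of the graph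
with `u` removed that contains `C k \ {u}` and misses every other clique through `u`. -/
lemma exists_branch {V : Type*} [DecidableEq V] (C : ℕ → Finset V) (D : ℕ → V) (n : ℕ)
    (hRIP : ∀ k, 2 ≤ k → k ≤ n → C k ∩ (Finset.Icc 1 (k-1)).biUnion C = {D k})
    (u : V) (k : ℕ) (hk1 : 1 ≤ k) (hkn : k ≤ n) (hu : u ∈ C k) :
    ∃ B : Set V, u ∉ B ∧ (∀ w ∈ C k, w ≠ u → w ∈ B) ∧
      (∀ w ∈ B, ∃ l, 1 ≤ l ∧ l ≤ n ∧ w ∈ C l) ∧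
      (∀ l, 1 ≤ l → l ≤ n → (∀ w ∈ C l, w ≠ u → w ∈ B) ∨ (∀ w ∈ C l, w ∉ B)) ∧
      (∀ l, 1 ≤ l → l ≤ n → l ≠ k → u ∈ C l → ∀ w ∈ C l, w ∉ B) := by
  induction n with
  | zero => omega
  | succ n ih =>
    have hsep : ∀ l w, 1 ≤ l → l ≤ n → w ∈ C l → w ∈ C (n+1) → w = D (n+1) := by
      intro l w h1 h2 hw hw'
      have : w ∈ C (n+1) ∩ (Finset.Icc 1 (n+1-1)).biUnion C := by
        simp only [Finset.mem_inter, Finset.mem_biUnion, Finset.mem_Icc, Nat.add_sub_cancel]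
        exact ⟨hw', l, ⟨h1, h2⟩, hw⟩
      rw [hRIP (n+1) (by omega) le_rfl] at this
      simpa using this
    obtain hk | rfl : k ≤ n ∨ k = n+1 := by omega
    · obtain ⟨B, h1, h2, h3, h4, h5⟩ := ih (fun k h1 h2 => hRIP k h1 (by omega)) hk
      have hD : D (n+1) ∈ C (n+1) := by
        have : D (n+1) ∈ C (n+1) ∩ (Finset.Icc 1 (n+1-1)).biUnion C := by
          rw [hRIP (n+1) (by omega) le_rfl]; simp
        exact (Finset.mem_inter.1 this).1
      by_cases hDB : D (n+1) ∈ B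
      -- The new clique is attached inside the branch, so it belongs to it.
      · have huC : u ∉ C (n+1) := fun h => h1 (hsep k u hk1 hk hu h ▸ hDB)
        refine ⟨B ∪ {w | w ∈ C (n+1)}, by simp [h1, huC], fun w hw hwu => Or.inl (h2 w hw hwu),
          ?_, ?_, ?_⟩
        · rintro w (hw | hw)
          · obtain ⟨l, a, b, c⟩ := h3 w hw
            exact ⟨l, a, by omega, c⟩
          · exact ⟨n+1, by omega, le_rfl, hw⟩
        · intro l hl1 hl2
          obtain hl | rfl : l ≤ n ∨ l = n+1 := by omega
          · rcases h4 l hl1 hl with h | h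
            · exact Or.inl fun w hw hwu => Or.inl (h w hw hwu)
            · right
              rintro w hw (hw' | hw')
              · exact h w hw hw'
              · exact h w hw (hsep l w hl1 hl hw hw' ▸ hDB)
          · exact Or.inl fun w hw _ => Or.inr hw
        · intro l hl1 hl2 hlk hul
          obtain hl | rfl : l ≤ n ∨ l = n+1 := by omega
          · rintro w hw (hw' | hw')
            · exact h5 l hl1 hl hlk hul w hw hw'
            · exact h5 l hl1 hl hlk hul w hw (hsep l w hl1 hl hw hw' ▸ hDB)
          · exact absurd hul huC
      · have hnew : ∀ w ∈ C (n+1), w ∉ B := by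
          intro w hw hwB
          obtain ⟨l, a, b, c⟩ := h3 w hwB
          exact hDB (hsep l w a b c hw ▸ hwB)
        refine ⟨B, h1, h2, ?_, ?_, ?_⟩
        · intro w hw
          obtain ⟨l, a, b, c⟩ := h3 w hw
          exact ⟨l, a, by omega, c⟩
        · intro l hl1 hl2
          obtain hl | rfl : l ≤ n ∨ l = n+1 := by omega
          · exact h4 l hl1 hl
          · exact Or.inr hnew
        · intro l hl1 hl2 hlk hul
          obtain hl | rfl : l ≤ n ∨ l = n+1 := by omega
          · exact h5 l hl1 hl hlk hul
          · exact hnew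
    · by_cases hU : ∃ l, 1 ≤ l ∧ l ≤ n ∧ u ∈ C l
      -- Here `u` is the separator of the last clique, which is a branch by itself.
      · obtain ⟨l₀, a, b, c⟩ := hU
        have huD := hsep l₀ u a b c hu
        have hold : ∀ l, 1 ≤ l → l ≤ n → ∀ w ∈ C l, w ∉ {w | w ∈ C (n+1) ∧ w ≠ u} :=
          fun l hl1 hl w hw hw' => hw'.2 ((hsep l w hl1 hl hw hw'.1).trans huD.symm)
        refine ⟨{w | w ∈ C (n+1) ∧ w ≠ u}, fun h => h.2 rfl, fun w hw hwu => ⟨hw, hwu⟩,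
          fun w hw => ⟨n+1, by omega, le_rfl, hw.1⟩, fun l hl1 hl2 => ?_,
          fun l hl1 hl2 hlk _ => hold l hl1 (by omega)⟩
        obtain hl | rfl : l ≤ n ∨ l = n+1 := by omega
        · exact Or.inr (hold l hl1 hl)
        · exact Or.inl fun w hw hwu => ⟨hw, hwu⟩
      -- Otherwise the last clique is the only one through `u`, and the branch is everything else.
      · exact ⟨{w | w ≠ u ∧ ∃ l, 1 ≤ l ∧ l ≤ n+1 ∧ w ∈ C l}, fun h => h.1 rfl,
          fun w hw hwu => ⟨hwu, n+1, by omega, le_rfl, hw⟩, fun w hw => hw.2,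
          fun l hl1 hl2 => Or.inl fun w hw hwu => ⟨hwu, l, hl1, hl2, hw⟩,
          fun l hl1 hl2 hlk hul => absurd ⟨l, hl1, by omega, hul⟩ hU⟩

open Classical in
/-- Swapping two vectors that agree at the cut vertex `u` on the branch `B` preserves the sum of
their gauges, because each clique only sees one side of the cut. -/
lemma gauge_swap {V : Type*} (N : ℕ) (C : ℕ → Finset V) (D : ℕ → V)
    (gC : ℕ → (V → ℝ) → ℝ)
    (hloc : ∀ k, 1 ≤ k → k ≤ N → ∀ x y : V → ℝ, (∀ w ∈ C k, x w = y w) → gC k x = gC k y)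
    (g : (V → ℝ) → ℝ)
    (hg : ∀ x, g x = (∑ k ∈ Finset.Icc 1 N, gC k x) - ∑ k ∈ Finset.Icc 2 N, x (D k))
    (u : V) (B : Set V)
    (hB : ∀ l, 1 ≤ l → l ≤ N → (∀ w ∈ C l, w ≠ u → w ∈ B) ∨ (∀ w ∈ C l, w ∉ B))
    (x y : V → ℝ) (hxy : x u = y u) :
    g (fun w => if w ∈ B then y w else x w) + g (fun w => if w ∈ B then x w else y w)
      = g x + g y := by
  have h1 : ∑ k ∈ Finset.Icc 1 N, gC k (fun w => if w ∈ B then y w else x w)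
      + ∑ k ∈ Finset.Icc 1 N, gC k (fun w => if w ∈ B then x w else y w)
      = ∑ k ∈ Finset.Icc 1 N, gC k x + ∑ k ∈ Finset.Icc 1 N, gC k y := by
    rw [← Finset.sum_add_distrib, ← Finset.sum_add_distrib]
    refine Finset.sum_congr rfl fun k hk => ?_
    rw [Finset.mem_Icc] at hk
    rcases hB k hk.1 hk.2 with h | h
    · rw [hloc k hk.1 hk.2 (fun w => if w ∈ B then y w else x w) y,
        hloc k hk.1 hk.2 (fun w => if w ∈ B then x w else y w) x, add_comm]
      all_goals
        intro w hw
        by_cases hwu : w = u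
        · subst hwu; simp [hxy]
        · simp [h w hw hwu]
    · rw [hloc k hk.1 hk.2 (fun w => if w ∈ B then y w else x w) x,
        hloc k hk.1 hk.2 (fun w => if w ∈ B then x w else y w) y]
      all_goals
        intro w hw
        simp [h w hw]
  have h2 : ∑ k ∈ Finset.Icc 2 N, (if D k ∈ B then y (D k) else x (D k))
      + ∑ k ∈ Finset.Icc 2 N, (if D k ∈ B then x (D k) else y (D k))
      = ∑ k ∈ Finset.Icc 2 N, x (D k) + ∑ k ∈ Finset.Icc 2 N, y (D k) := by
    rw [← Finset.sum_add_distrib, ← Finset.sum_add_distrib]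
    refine Finset.sum_congr rfl fun k _ => ?_
    split_ifs <;> ring
  simp only [hg]
  linarith

open Classical in
/-- One step of the factorization: `α_{j|i} = α_{u|i} α_{j|u}` when gauges can be swapped across a
cut at `u` with `j` in the branch `B` and `i` outside. The hypothesis `hle` is the maximality of
`α`, expressed through full vectors instead of the bivariate marginal gauge. -/
lemma alpha_mul_of_cut {V : Type*} (g : (V → ℝ) → ℝ) (alpha : V → V → ℝ)
    (hgmax : ∀ x : V → ℝ, (∀ w, 0 ≤ x w) → ∀ a, x a ≤ g x)
    (hghom : ∀ t : ℝ, 0 ≤ t → ∀ x : V → ℝ, (∀ w, 0 ≤ x w) → g (t • x) = t * g x)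
    (hα0 : ∀ a b, a ≠ b → 0 ≤ alpha a b)
    (hle : ∀ a b, a ≠ b → ∀ z : V → ℝ, (∀ w, 0 ≤ z w) → z a = 1 → g z = 1 → z b ≤ alpha a b)
    (hfull : ∀ a : V, g (fun w => if w = a then 1 else alpha a w) = 1)
    (i u j : V) (hiu : i ≠ u) (hij : i ≠ j) (huj : u ≠ j)
    (B : Set V) (hu : u ∉ B) (hj : j ∈ B) (hi : i ∉ B)
    (hswap : ∀ x y : V → ℝ, x u = y u →
      g (fun w => if w ∈ B then y w else x w) + g (fun w => if w ∈ B then x w else y w)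
        = g x + g y) :
    alpha i j = alpha i u * alpha u j := by
  have hx0 : ∀ a w, 0 ≤ (fun w => if w = a then 1 else alpha a w) w := by
    intro a w
    dsimp only
    split_ifs with h
    · exact zero_le_one
    · exact hα0 a w (Ne.symm h)
  set c := alpha i u with hc
  have hc0 : 0 ≤ c := hα0 i u hiu
  set x : V → ℝ := fun w => if w = i then 1 else alpha i w with hx
  set y : V → ℝ := c • (fun w => if w = u then 1 else alpha u w) with hy
  have hx0' : ∀ w, 0 ≤ x w := hx0 i
  have hy0 : ∀ w, 0 ≤ y w := fun w => mul_nonneg hc0 (hx0 u w)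
  have hxu : x u = c := by simp [hx, hiu.symm, hc]
  have hyu : y u = c := by simp [hy]
  have hxj : x j = alpha i j := by simp [hx, hij.symm]
  have hyj : y j = c * alpha u j := by simp [hy, huj.symm]
  have hxi : x i = 1 := by simp [hx]
  have hgx : g x = 1 := hfull i
  have hgy : g y = c := by rw [hy, hghom c hc0 _ (hx0 u), hfull u, mul_one]
  have hsw := hswap x y (hxu.trans hyu.symm)
  set z₁ : V → ℝ := fun w => if w ∈ B then y w else x w with hz₁
  set z₂ : V → ℝ := fun w => if w ∈ B then x w else y w with hz₂
  have hz₁0 : ∀ w, 0 ≤ z₁ w := by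
    intro w; simp only [hz₁]; split_ifs
    exacts [hy0 w, hx0' w]
  have hz₂0 : ∀ w, 0 ≤ z₂ w := by
    intro w; simp only [hz₂]; split_ifs
    exacts [hx0' w, hy0 w]
  have hz₁i : z₁ i = 1 := by simp only [hz₁, if_neg hi, hxi]
  have hz₁j : z₁ j = c * alpha u j := by simp only [hz₁, if_pos hj, hyj]
  have hz₂u : z₂ u = c := by simp only [hz₂, if_neg hu, hyu]
  have hz₂j : z₂ j = alpha i j := by simp only [hz₂, if_pos hj, hxj]
  have b₁ := hgmax z₁ hz₁0 i
  have b₂ := hgmax z₂ hz₂0 u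
  have e₁ : g z₁ = 1 := by linarith
  have e₂ : g z₂ = c := by linarith
  apply le_antisymm
  · rcases hc0.eq_or_lt with h0 | hpos
    -- If `α_{u|i} = 0`, then `g z₂ = 0` already forces `α_{j|i} = 0`.
    · have := hgmax z₂ hz₂0 j
      rw [← h0, zero_mul]
      linarith
    · have hnn : ∀ w, 0 ≤ (c⁻¹ • z₂) w := fun w => mul_nonneg (inv_nonneg.2 hc0) (hz₂0 w)
      have := hle u j huj (c⁻¹ • z₂) hnn
        (by simp [hz₂u, hpos.ne'])
        (by rw [hghom _ (inv_nonneg.2 hc0) _ hz₂0, e₂, inv_mul_cancel₀ hpos.ne'])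
      rw [Pi.smul_apply, smul_eq_mul, hz₂j, inv_mul_le_iff₀ hpos] at this
      exact this
  · rw [← hz₁j]
    exact hle i j hij z₁ hz₁0 hz₁i e₁

/-- A geodesic vertex sequence admits no shortcuts between two of its vertices. -/
lemma no_shortcut {V : Type*} (G : SimpleGraph V) (m : ℕ) (v : ℕ → V)
    (hadj : ∀ t < m, G.Adj (v t) (v (t+1))) (hshort : G.dist (v 0) (v m) = m)
    (s t : ℕ) (hst : s ≤ t) (htm : t ≤ m) (p : G.Walk (v s) (v t)) : t - s ≤ p.length := by
  have hw : ∀ a d, a + d ≤ m → ∃ q : G.Walk (v a) (v (a+d)), q.length = d := by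
    intro a d
    induction d with
    | zero => exact fun _ => ⟨SimpleGraph.Walk.nil, rfl⟩
    | succ d ih =>
      intro h
      obtain ⟨q, hq⟩ := ih (by omega)
      exact ⟨q.concat (hadj (a+d) (by omega)), by simp [hq]⟩
  have hw' : ∀ a b, a ≤ b → b ≤ m → ∃ q : G.Walk (v a) (v b), q.length = b - a := by
    intro a b hab hb
    obtain ⟨d, rfl⟩ := Nat.exists_eq_add_of_le hab
    rw [Nat.add_sub_cancel_left]
    exact hw a d hb
  obtain ⟨q₁, h₁⟩ := hw' 0 s (Nat.zero_le s) (by omega)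
  obtain ⟨q₂, h₂⟩ := hw' t m htm le_rfl
  have := G.dist_le ((q₁.append p).append q₂)
  rw [SimpleGraph.Walk.length_append, SimpleGraph.Walk.length_append] at this
  omega

/-- **Proposition 2**: for a block geometric extremal graphical model in exponential
margins, the conditional-extremes coefficient `α_{j|i}` factorizes as the product of the
pathwise coefficients along the (unique) shortest path from `i` to `j` in the block
graph `G`.  Here `alpha a b` denotes `α_{b|a}`, characterized as the largest
`y ∈ [0,1]` with `g_{{a,b}}(1, y) = 1` (bivariate marginal gauge), and hypothesis
`hfull` states that `g` evaluated with `1` at `i` and `α_{·|i}` elsewhere equals `1`. -/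
theorem stmt_2
    {V : Type*} [Fintype V] [DecidableEq V]
    (G : SimpleGraph V)
    (N : ℕ) (hN : 1 ≤ N)
    (C : ℕ → Finset V) (D : ℕ → V)
    (hcover : ∀ w : V, ∃ k, 1 ≤ k ∧ k ≤ N ∧ w ∈ C k)
    (hCne : ∀ k, 1 ≤ k → k ≤ N → (C k).Nonempty)
    (hRIP : ∀ k, 2 ≤ k → k ≤ N → C k ∩ (Finset.Icc 1 (k-1)).biUnion C = {D k})
    (hG : ∀ a b : V, G.Adj a b ↔ (a ≠ b ∧ ∃ k, 1 ≤ k ∧ k ≤ N ∧ a ∈ C k ∧ b ∈ C k))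
    (gC : ℕ → (V → ℝ) → ℝ)
    (hloc : ∀ k, 1 ≤ k → k ≤ N → ∀ x y : V → ℝ, (∀ w ∈ C k, x w = y w) → gC k x = gC k y)
    (hcont : ∀ k, 1 ≤ k → k ≤ N → ContinuousOn (gC k) {x : V → ℝ | ∀ w, 0 ≤ x w})
    (hhom : ∀ k, 1 ≤ k → k ≤ N → ∀ t : ℝ, 0 ≤ t → ∀ x : V → ℝ, (∀ w, 0 ≤ x w) →
      gC k (t • x) = t * gC k x)
    (hmax : ∀ k, 1 ≤ k → k ≤ N → ∀ x : V → ℝ, (∀ w, 0 ≤ x w) → ∀ w ∈ C k, x w ≤ gC k x)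
    (g : (V → ℝ) → ℝ)
    (hg : ∀ x, g x = (∑ k ∈ Finset.Icc 1 N, gC k x) - ∑ k ∈ Finset.Icc 2 N, x (D k))
    (biv : V → V → ℝ → ℝ → ℝ)
    (hbiv : ∀ a b : V, ∀ u y : ℝ, biv a b u y =
      sInf {r | ∃ z : V → ℝ, (∀ w, 0 ≤ z w) ∧ z a = u ∧ z b = y ∧ r = g z})
    (alpha : V → V → ℝ)
    (halpha : ∀ a b : V, a ≠ b →
      IsGreatest {y | y ∈ Set.Icc (0:ℝ) 1 ∧ biv a b 1 y = 1} (alpha a b))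
    (hfull : ∀ a : V, g (fun w => if w = a then 1 else alpha a w) = 1)
    (i j : V) (hij : i ≠ j)
    (m : ℕ) (hm : 1 ≤ m) (v : ℕ → V)
    (hv0 : v 0 = i) (hvm : v m = j)
    (hadj : ∀ t < m, G.Adj (v t) (v (t+1)))
    (hshort : G.dist i j = m) :
    alpha i j = ∏ t ∈ Finset.range m, alpha (v t) (v (t+1)) := by
  subst hv0 hvm
  have hgmax : ∀ x : V → ℝ, (∀ w, 0 ≤ x w) → ∀ a, x a ≤ g x := by
    intro x hx a
    obtain ⟨p, hp, hs⟩ := exists_reroot C D N hRIP a (hcover a)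
    have := Finset.sum_le_sum (s := Finset.Icc 1 N) (f := fun k => x (p k))
      (g := fun k => gC k x) fun k hk => by
        rw [Finset.mem_Icc] at hk
        exact hmax k hk.1 hk.2 x hx _ (hp k hk.1 hk.2)
    rw [hg]
    linarith [hs x]
  have hghom : ∀ t : ℝ, 0 ≤ t → ∀ x : V → ℝ, (∀ w, 0 ≤ x w) → g (t • x) = t * g x := by
    intro t ht x hx
    rw [hg, hg, mul_sub, Finset.mul_sum, Finset.mul_sum]
    congr 1
    refine Finset.sum_congr rfl fun k hk => ?_
    rw [Finset.mem_Icc] at hk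
    exact hhom k hk.1 hk.2 t ht x hx
  have hle : ∀ a b, a ≠ b → ∀ z : V → ℝ, (∀ w, 0 ≤ z w) → z a = 1 → g z = 1 →
      z b ≤ alpha a b := by
    intro a b hab z hz hza hgz
    refine (halpha a b hab).2 ⟨⟨hz b, hgz ▸ hgmax z hz b⟩, ?_⟩
    rw [hbiv]
    refine IsLeast.csInf_eq ⟨⟨z, hz, hza, rfl, hgz.symm⟩, ?_⟩
    rintro r ⟨z', h1, h2, -, rfl⟩
    exact h2 ▸ hgmax z' h1 a
  have hne : ∀ s t, s < t → t ≤ m → v s ≠ v t := by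
    intro s t hst htm h
    have := no_shortcut G m v hadj hshort s t hst.le htm (SimpleGraph.Walk.nil.copy rfl h)
    simp at this
    omega
  have main : ∀ t, t + 1 ≤ m →
      alpha (v 0) (v (t+1)) = ∏ s ∈ Finset.range (t+1), alpha (v s) (v (s+1)) := by
    intro t
    induction t with
    | zero => intro _; simp
    | succ t ih =>
      intro ht
      rw [Finset.prod_range_succ, ← ih (by omega)]
      obtain ⟨-, k, hk1, hkN, huk, hjk⟩ := (hG _ _).1 (hadj (t+1) (by omega))
      obtain ⟨-, l, hl1, hlN, hal, hul⟩ := (hG _ _).1 (hadj t (by omega))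
      obtain ⟨B, hu, hkB, -, hB, hother⟩ := exists_branch C D N hRIP (v (t+1)) k hk1 hkN huk
      have hlk : l ≠ k := by
        rintro rfl
        have hA : G.Adj (v t) (v (t+1+1)) :=
          (hG _ _).2 ⟨hne t (t+1+1) (by omega) ht, l, hl1, hlN, hal, hjk⟩
        have := no_shortcut G m v hadj hshort t (t+1+1) (by omega) ht hA.toWalk
        simp at this
        omega
      have hvt : v t ∉ B := hother l hl1 hlN hlk hul _ hal
      -- The path up to `v t` avoids the cut vertex `v (t+1)`, so it stays on one side.
      have hi : v 0 ∉ B := by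
        intro h0
        have : ∀ s, s ≤ t → v s ∈ B := by
          intro s
          induction s with
          | zero => exact fun _ => h0
          | succ s ihs =>
            intro hs
            obtain ⟨-, q, hq1, hqN, hsq, hsq'⟩ := (hG _ _).1 (hadj s (by omega))
            rcases hB q hq1 hqN with h | h
            · exact h _ hsq' (hne (s+1) (t+1) (by omega) (by omega))
            · exact absurd (ihs (by omega)) (h _ hsq)
        exact hvt (this t le_rfl)
      exact alpha_mul_of_cut g alpha hgmax hghom (fun a b hab => (halpha a b hab).1.1.1) hle
        (by convert hfull) (v 0) (v (t+1)) (v (t+1+1)) (hne 0 (t+1) (by omega) (by omega))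
        (hne 0 (t+1+1) (by omega) ht) (hne (t+1) (t+1+1) (by omega) ht) B hu
        (hkB _ hjk (hne (t+1) (t+1+1) (by omega) ht).symm) hi
        (gauge_swap N C D gC hloc g hg (v (t+1)) B hB)
  obtain ⟨t, rfl⟩ : ∃ t, m = t + 1 := ⟨m - 1, by omega⟩
  exact main t le_rfl
end

section
/- Let g be the gauge function of a block geometric extremal graphical model on a block graph G = (V, E) in Laplace margins. For distinct vertices a, b and a sign s ∈ {+1, −1}, define α^{s}_{b|a} as the largest α ∈ [−1,1] with g_{{a,b}}(s·1, α) = 1, where g_{{a,b}} is the bivariate marginal gauge. Assume that for every vertex i ∈ V and every sign s ∈ {+1, −1}, the vector α^{s}_{V∖{i}|i} = (α^{s}_{j|i})_{j≠i} satisfies: g, evaluated with s·1 in coordinate i and α^{s}_{V∖{i}|i} in the remaining coordinates, equals 1. Then for any two distinct vertices i and j, with {i = v_0, v_1, …, v_m = j} the vertices along the unique shortest path of length m from i to j: if m = 2, then α^{+}_{j|i} = |α^{+}_{v_1|i}| · α^{sgn(α^{+}_{v_1|i})}_{j|v_1}; and if m ≥ 3, then α^{+}_{j|i} = |α^{+}_{v_1|i}|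 · ∏_{k=2}^{m−1} |α^{sgn(α^{+}_{v_{k−1}|i})}_{v_k|v_{k−1}}| · α^{sgn(α^{+}_{v_{m−1}|i})}_{j|v_{m−1}}, where the signs satisfy the recursion sgn(α^{+}_{v_k|i}) = sgn(α^{sgn(α^{+}_{v_{k−1}|i})}_{v_k|v_{k−1}}). -/
/-! For the unique shortest path `v 0 = i, …, v m = j`, it suffices to prove the one-step identity
`α⁺_{j|i} = |α⁺_{s|i}| · α^{sgn α⁺_{s|i}}_{j|s}` whenever the vertex `s` separates `i` from `j`
(`alpha_eq_of_glue`): applied to `s = v (t - 1)` and `j = v t` for `2 ≤ t ≤ m`, it telescopes to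
the product formula.

For the one-step identity, let `x` be the vector equal to `1` at `i` and `α⁺_{·|i}` elsewhere, and
let `y` be `|x_s|` times the vector equal to `sgn x_s` at `s` and `α^{sgn x_s}_{·|s}` elsewhere
(`y = 0` if `x_s = 0`). Then `g x = 1`, `g y = |x_s|` and `x_s = y_s`. Swapping `x` and `y` on the
side of `i` in the separation by `s` gives vectors `z` (`x` on the side of `i`, `y` on the side of `j`) and
`z'`, and since each clique, apart from `s`, lies on one side, `g z + g z' = g x + g y`
(`gauge_glue`). The gauge dominates every coordinate (`abs_le_gauge`), so `g z ≥ |z_i| = 1` and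
`g z' ≥ |z'_s| = |x_s|`, and both are equalities. Maximality of `α⁺_{j|i}` at `z` and of
`α^{sgn x_s}_{j|s}` at `z' / |x_s|` gives the two inequalities.

That `v (t - 1)` separates `v 0` from `v t` is a property of block graphs: two non-adjacent
neighbours of `s` lie in different components of `G - s`. By induction on the number of cliques,
`exists_separating_label` constructs a labelling of the vertices that is constant on cliques
away from `s` and distinguishes such neighbours. -/

open Filter Topology

/-! ### Separation in block graphs -/

/-- A labelling `f` of the vertices such that each clique minus `s` has a single label, and any two
neighbours of `s` with equal labels lie in a common clique. The bound `f w ≤ N` provides a fresh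
label for the induction on the number of cliques. -/
lemma exists_separating_label {V : Type*} [DecidableEq V] (C : ℕ → Finset V) (D : ℕ → V) (s : V)
    (N : ℕ) (hRIP : ∀ k, 2 ≤ k → k ≤ N → C k ∩ (Finset.Icc 1 (k-1)).biUnion C = {D k}) :
    ∃ f : V → ℕ, (∀ w, f w ≤ N) ∧
      (∀ k, 1 ≤ k → k ≤ N → ∀ a ∈ C k, ∀ b ∈ C k, a ≠ s → b ≠ s → f a = f b) ∧
      (∀ k l, 1 ≤ k → k ≤ N → 1 ≤ l → l ≤ N → s ∈ C k → s ∈ C l → ∀ p ∈ C k, ∀ q ∈ C l,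
        p ≠ s → q ≠ s → f p = f q → ∃ r, 1 ≤ r ∧ r ≤ N ∧ p ∈ C r ∧ q ∈ C r) := by
  induction N with
  | zero => exact ⟨fun _ => 0, by simp, by intros; omega, by intros; omega⟩
  | succ n ih =>
    rcases Nat.eq_zero_or_pos n with rfl | hn
    · refine ⟨fun _ => 0, by simp, by intros; rfl, ?_⟩
      intro k l hk hk' hl hl' _ _ p hp q hq _ _ _
      obtain rfl : k = 1 := by omega
      obtain rfl : l = 1 := by omega
      exact ⟨1, le_rfl, by omega, hp, hq⟩
    obtain ⟨f, hb, hc, hs⟩ := ih (fun k h1 h2 => hRIP k h1 (by omega))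
    have hR := hRIP (n+1) (by omega) le_rfl
    have hmem : ∀ w, (w ∈ C (n+1) ∧ ∃ k, 1 ≤ k ∧ k ≤ n ∧ w ∈ C k) ↔ w = D (n+1) := by
      intro w
      have := Finset.ext_iff.mp hR w
      simpa [and_assoc] using this
    have hold : ∀ w k, w ∈ C (n+1) → 1 ≤ k → k ≤ n → w ∈ C k → w = D (n+1) :=
      fun w k h h1 h2 h3 => (hmem w).1 ⟨h, k, h1, h2, h3⟩
    have hD := ((hmem _).2 rfl).1
    by_cases hsC : s ∈ C (n+1)
    · by_cases hsD : s = D (n+1)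
      · -- `s` is the separator: the new vertices form a new component of `G - s`
        refine ⟨fun w => if w ∈ C (n+1) then n+1 else f w, ?_, ?_, ?_⟩
        · intro w
          have := hb w
          dsimp only
          split_ifs <;> omega
        · intro k h1 h2 a ha b hb' has hbs
          rcases Nat.lt_or_ge n k with h | h
          · obtain rfl : k = n+1 := by omega
            simp [ha, hb']
          · have ha' : a ∉ C (n+1) := fun h' => has (by rw [hold a k h' h1 h ha, hsD])
            have hb'' : b ∉ C (n+1) := fun h' => hbs (by rw [hold b k h' h1 h hb', hsD])
            simp only [ha', hb'', if_false]
            exact hc k h1 h a ha b hb' has hbs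
        · intro k l hk hk' hl hl' hsk hsl p hp q hq hps hqs hpq
          have key : ∀ w k, 1 ≤ k → k ≤ n + 1 → w ∈ C k → w ≠ s → w ∉ C (n+1) → k ≤ n := by
            intro w k h1 h2 hw _ hw'
            rcases Nat.lt_or_ge n k with h | h
            · obtain rfl : k = n+1 := by omega
              exact absurd hw hw'
            · exact h
          by_cases hp' : p ∈ C (n+1) <;> by_cases hq' : q ∈ C (n+1)
          · exact ⟨n+1, by omega, le_rfl, hp', hq'⟩
          · have := hb q
            simp only [hp', hq', if_true, if_false] at hpq
            omega
          · have := hb p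
            simp only [hp', hq', if_true, if_false] at hpq
            omega
          · simp only [hp', hq', if_false] at hpq
            obtain ⟨r, h1, h2, h3⟩ := hs k l hk (key p k hk hk' hp hps hp') hl
              (key q l hl hl' hq hqs hq') hsk hsl p hp q hq hps hqs hpq
            exact ⟨r, h1, by omega, h3⟩
      · -- `s` is a new vertex: its only clique is `C (n+1)`
        refine ⟨fun _ => 0, by simp, by intros; rfl, ?_⟩
        intro k l hk hk' hl hl' hsk hsl p hp q hq _ _ _
        have key : ∀ k, 1 ≤ k → k ≤ n + 1 → s ∈ C k → k = n + 1 := by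
          intro k h1 h2 h3
          by_contra h
          exact hsD (hold s k hsC h1 (by omega) h3)
        obtain rfl := key k hk hk' hsk
        obtain rfl := key l hl hl' hsl
        exact ⟨n+1, by omega, le_rfl, hp, hq⟩
    · -- the new vertices are attached to the component of `D (n+1)`, which is not `s`
      refine ⟨fun w => if w ∈ C (n+1) then f (D (n+1)) else f w, ?_, ?_, ?_⟩
      · intro w
        have := hb w
        have := hb (D (n+1))
        dsimp only
        split_ifs <;> omega
      · intro k h1 h2 a ha b hb' has hbs
        rcases Nat.lt_or_ge n k with h | h
        · obtain rfl : k = n+1 := by omega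
          simp [ha, hb']
        · have key : ∀ w ∈ C k, (if w ∈ C (n+1) then f (D (n+1)) else f w) = f w := by
            intro w hw
            split_ifs with hw'
            · rw [hold w k hw' h1 h hw]
            · rfl
          simp only [key a ha, key b hb']
          exact hc k h1 h a ha b hb' has hbs
      · intro k l hk hk' hl hl' hsk hsl p hp q hq hps hqs hpq
        have hle : ∀ k, k ≤ n + 1 → s ∈ C k → k ≤ n := by
          intro k h2 h3
          by_contra h
          obtain rfl : k = n+1 := by omega
          exact hsC h3
        have key : ∀ k, 1 ≤ k → k ≤ n → ∀ w ∈ C k,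
            (if w ∈ C (n+1) then f (D (n+1)) else f w) = f w := by
          intro k h1 h w hw
          split_ifs with hw'
          · rw [hold w k hw' h1 h hw]
          · rfl
        simp only [key k hk (hle k hk' hsk) p hp, key l hl (hle l hl' hsl) q hq] at hpq
        obtain ⟨r, h1, h2, h3⟩ := hs k l hk (hle k hk' hsk) hl (hle l hl' hsl) hsk hsl
          p hp q hq hps hqs hpq
        exact ⟨r, h1, by omega, h3⟩

/-! ### Properties of the gauge -/

/-- The gauge of the model built from the first `N` cliques dominates the coordinates they cover. -/
lemma abs_le_gauge {V : Type*} [DecidableEq V] (C : ℕ → Finset V) (D : ℕ → V)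
    (gC : ℕ → (V → ℝ) → ℝ) (x : V → ℝ) (N : ℕ)
    (hRIP : ∀ k, 2 ≤ k → k ≤ N → C k ∩ (Finset.Icc 1 (k-1)).biUnion C = {D k})
    (hmax : ∀ k, 1 ≤ k → k ≤ N → ∀ w ∈ C k, |x w| ≤ gC k x) :
    ∀ k, 1 ≤ k → k ≤ N → ∀ w ∈ C k,
      |x w| ≤ (∑ k ∈ Finset.Icc 1 N, gC k x) - ∑ k ∈ Finset.Icc 2 N, |x (D k)| := by
  induction N with
  | zero => intros; omega
  | succ n ih =>
    rcases Nat.eq_zero_or_pos n with rfl | hn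
    · intro k h1 h2 w hw
      obtain rfl : k = 1 := by omega
      simpa using hmax 1 le_rfl le_rfl w hw
    have ih' := ih (fun k h1 h2 => hRIP k h1 (by omega)) (fun k h1 h2 => hmax k h1 (by omega))
    have hD : D (n+1) ∈ C (n+1) ∩ (Finset.Icc 1 (n+1-1)).biUnion C := by
      rw [hRIP (n+1) (by omega) le_rfl]; simp
    simp only [Finset.mem_inter, Finset.mem_biUnion, Finset.mem_Icc, Nat.add_sub_cancel] at hD
    obtain ⟨hD1, l, ⟨hl1, hl2⟩, hDl⟩ := hD
    have e1 := ih' l hl1 hl2 _ hDl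
    have e2 := hmax (n+1) (by omega) le_rfl _ hD1
    rw [Finset.sum_Icc_succ_top (by omega), Finset.sum_Icc_succ_top (by omega)]
    intro k h1 h2 w hw
    rcases Nat.lt_or_ge n k with h | h
    · obtain rfl : k = n+1 := by omega
      have := hmax (n+1) (by omega) le_rfl w hw
      linarith
    · have := ih' k h1 h w hw
      linarith

/-- Exchanging two vectors that agree at `s` on one side `P` of a separation by `s` preserves the
sum of their gauges. -/
lemma gauge_glue {V : Type*} (C : ℕ → Finset V) (D : ℕ → V)
    (gC : ℕ → (V → ℝ) → ℝ) (N : ℕ)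
    (hloc : ∀ k, 1 ≤ k → k ≤ N → ∀ x y : V → ℝ, (∀ w ∈ C k, x w = y w) → gC k x = gC k y)
    (g : (V → ℝ) → ℝ)
    (hg : ∀ x, g x = (∑ k ∈ Finset.Icc 1 N, gC k x) - ∑ k ∈ Finset.Icc 2 N, |x (D k)|)
    (s : V) (P : V → Prop) [DecidablePred P]
    (hP : ∀ k, 1 ≤ k → k ≤ N → ∀ a ∈ C k, ∀ b ∈ C k, a ≠ s → b ≠ s → (P a ↔ P b))
    (x y : V → ℝ) (hxy : x s = y s) :
    g (fun w => if P w then x w else y w) + g (fun w => if P w then y w else x w)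
      = g x + g y := by
  have h1 : ∑ k ∈ Finset.Icc 1 N, gC k (fun w => if P w then x w else y w)
      + ∑ k ∈ Finset.Icc 1 N, gC k (fun w => if P w then y w else x w)
      = ∑ k ∈ Finset.Icc 1 N, gC k x + ∑ k ∈ Finset.Icc 1 N, gC k y := by
    rw [← Finset.sum_add_distrib, ← Finset.sum_add_distrib]
    refine Finset.sum_congr rfl fun k hk => ?_
    obtain ⟨hk1, hk2⟩ := Finset.mem_Icc.1 hk
    by_cases h : ∃ a ∈ C k, a ≠ s ∧ P a
    · obtain ⟨a, ha, has, hPa⟩ := h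
      have hw : ∀ w ∈ C k, w = s ∨ P w := fun w hw => by
        by_cases hws : w = s
        · exact Or.inl hws
        · exact Or.inr ((hP k hk1 hk2 a ha w hw has hws).1 hPa)
      rw [hloc k hk1 hk2 (fun w => if P w then x w else y w) x,
        hloc k hk1 hk2 (fun w => if P w then y w else x w) y]
      · intro w hwk
        rcases hw w hwk with rfl | h'
        · simp [hxy]
        · simp [h']
      · intro w hwk
        rcases hw w hwk with rfl | h'
        · simp [hxy]
        · simp [h']
    · have hw : ∀ w ∈ C k, w = s ∨ ¬ P w := fun w hw => by
        by_contra! hc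
        exact h ⟨w, hw, hc⟩
      rw [hloc k hk1 hk2 (fun w => if P w then x w else y w) y,
        hloc k hk1 hk2 (fun w => if P w then y w else x w) x, add_comm]
      · intro w hwk
        rcases hw w hwk with rfl | h'
        · simp [hxy]
        · simp [h']
      · intro w hwk
        rcases hw w hwk with rfl | h'
        · simp [hxy]
        · simp [h']
  have h2 : ∑ k ∈ Finset.Icc 2 N, |(fun w => if P w then x w else y w) (D k)|
      + ∑ k ∈ Finset.Icc 2 N, |(fun w => if P w then y w else x w) (D k)|
      = ∑ k ∈ Finset.Icc 2 N, |x (D k)| + ∑ k ∈ Finset.Icc 2 N, |y (D k)| := by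
    rw [← Finset.sum_add_distrib, ← Finset.sum_add_distrib]
    refine Finset.sum_congr rfl fun k _ => ?_
    dsimp only
    split_ifs
    · rfl
    · exact add_comm _ _
  rw [hg, hg, hg x, hg y]
  linarith

/-! ### One-step factorization -/

/-- The one-step factorization across a vertex `s` separating `i` (on the side `P`) from `j`. The
graph enters only through the exchange identity `hglue`, and the coefficients only through
their maximality `hα`. -/
lemma alpha_eq_of_glue {V : Type*} [DecidableEq V] (g : (V → ℝ) → ℝ)
    (hmax : ∀ x w, |x w| ≤ g x) (hhom : ∀ t : ℝ, 0 ≤ t → ∀ x, g (t • x) = t * g x)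
    (alpha : ℝ → V → V → ℝ)
    (hα : ∀ s : ℝ, s = 1 ∨ s = -1 → ∀ a b : V, a ≠ b → ∀ z : V → ℝ, z a = s → g z = 1 →
      z b ≤ alpha s a b)
    (hfull : ∀ s : ℝ, s = 1 ∨ s = -1 → ∀ a : V,
      g (fun w => if w = a then s else alpha s a w) = 1)
    (i s j : V) (his : i ≠ s) (hij : i ≠ j) (hsj : s ≠ j)
    (P : V → Prop) [DecidablePred P] (hi : P i) (hj : ¬ P j)
    (hglue : ∀ x y : V → ℝ, x s = y s →
      g (fun w => if P w then x w else y w) + g (fun w => if P w then y w else x w)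
        = g x + g y) :
    alpha 1 i j = |alpha 1 i s| * alpha (Real.sign (alpha 1 i s)) s j := by
  set x : V → ℝ := fun w => if w = i then 1 else alpha 1 i w with hx
  have hgx : g x = 1 := hfull 1 (Or.inl rfl) i
  have hxi : x i = 1 := by simp [hx]
  have hxs : x s = alpha 1 i s := by simp [hx, his.symm]
  have hxj : x j = alpha 1 i j := by simp [hx, hij.symm]
  rw [← hxs, ← hxj]
  by_cases h0 : x s = 0
  · have h := hglue x 0 (by simpa using h0)
    have hg0 : g 0 = 0 := by simpa using hhom 0 le_rfl 0
    have h1 := hmax (fun w => if P w then x w else (0 : V → ℝ) w) i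
    have h2 := hmax (fun w => if P w then (0 : V → ℝ) w else x w) j
    simp only [hi, hj, if_true, if_false, hxi, abs_one] at h1 h2
    have : |x j| ≤ 0 := by linarith
    rw [h0, abs_zero, zero_mul]
    exact abs_nonpos_iff.1 this
  · set σ := Real.sign (x s) with hσ
    have hσ1 : σ = 1 ∨ σ = -1 := (Real.sign_apply_eq_of_ne_zero _ h0).symm
    have hpos : 0 < |x s| := abs_pos.2 h0
    have hσx : |x s| * σ = x s := by
      rcases lt_or_gt_of_ne h0 with h | h
      · rw [hσ, Real.sign_of_neg h, abs_of_neg h]; ring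
      · rw [hσ, Real.sign_of_pos h, abs_of_pos h]; ring
    set y : V → ℝ := |x s| • fun w => if w = s then σ else alpha σ s w with hy
    have hgy : g y = |x s| := by rw [hy, hhom _ (abs_nonneg _), hfull σ hσ1 s, mul_one]
    have hys : y s = x s := by simp [hy, hσx]
    have hyj : y j = |x s| * alpha σ s j := by simp [hy, hsj.symm]
    have h := hglue x y hys.symm
    set z : V → ℝ := fun w => if P w then x w else y w with hz
    set z' : V → ℝ := fun w => if P w then y w else x w with hz'
    have hzi : z i = 1 := by simp [hz, hi, hxi]
    have hzj : z j = y j := by simp [hz, hj]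
    have hz's : z' s = x s := by simp [hz', hys]
    have hz'j : z' j = x j := by simp [hz', hj]
    have h1 := hmax z i
    have h2 := hmax z' s
    rw [hzi, abs_one] at h1
    rw [hz's] at h2
    have hgz : g z = 1 := by linarith
    have hgz' : g z' = |x s| := by linarith
    have k1 := hα 1 (Or.inl rfl) i j hij z hzi hgz
    have k2 := hα σ hσ1 s j hsj (|x s|⁻¹ • z')
      (by
        rw [Pi.smul_apply, smul_eq_mul, hz's]
        nth_rewrite 2 [← hσx]
        field_simp)
      (by rw [hhom _ (inv_nonneg.2 (abs_nonneg _)), hgz', inv_mul_cancel₀ hpos.ne'])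
    rw [Pi.smul_apply, smul_eq_mul, hz'j, inv_mul_le_iff₀ hpos] at k2
    rw [hzj, hyj, ← hxj] at k1
    exact le_antisymm k2 k1

/-! ### Geodesics and the product formula -/

lemma exists_walk_of_adj {V : Type*} (G : SimpleGraph V) (v : ℕ → V) (m : ℕ)
    (hadj : ∀ t < m, G.Adj (v t) (v (t+1))) (a n : ℕ) (h : a + n ≤ m) :
    ∃ p : G.Walk (v a) (v (a+n)), p.length = n := by
  induction n with
  | zero => exact ⟨SimpleGraph.Walk.nil, rfl⟩
  | succ n ih =>
    obtain ⟨p, hp⟩ := ih (by omega)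
    exact ⟨p.concat (hadj (a+n) (by omega)), by simp [hp]⟩

/-- No walk between two vertices of a geodesic is shorter than the segment joining them. -/
lemma le_length_of_geodesic {V : Type*} (G : SimpleGraph V) (v : ℕ → V) (m : ℕ)
    (hadj : ∀ t < m, G.Adj (v t) (v (t+1))) (hd : G.dist (v 0) (v m) = m)
    (a b : ℕ) (hb : b ≤ m) (ha : a ≤ m) (p : G.Walk (v a) (v b)) : b ≤ a + p.length := by
  obtain ⟨q, hq⟩ := exists_walk_of_adj G v m hadj 0 a (by omega)
  obtain ⟨r, hr⟩ := exists_walk_of_adj G v m hadj b (m - b) (by omega)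
  have := SimpleGraph.dist_le (((q.copy rfl (by rw [zero_add])).append p).append
    (r.copy rfl (by rw [Nat.add_sub_cancel' hb])))
  simp only [SimpleGraph.Walk.length_append, SimpleGraph.Walk.length_copy] at this
  omega

/-- **Proposition 5** (Laplace margins): for a block geometric extremal graphical model in
Laplace margins, the signed conditional-extremes coefficients factorize along the
(unique) shortest path.  Here `alpha s a b` denotes `α^s_{b|a}`, the largest
`y ∈ [-1,1]` with `g_{{a,b}}(s·1, y) = 1` (bivariate marginal gauge), for
`s ∈ {+1,-1}`; hypothesis `hfull` states that `g` evaluated with `s` at `i` and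
`α^s_{·|i}` elsewhere equals `1`.  The conclusion is the unified product formula, which
for `m = 2` reduces to `α⁺_{j|i} = |α⁺_{v₁|i}|·α^{sgn(α⁺_{v₁|i})}_{j|v₁}` (the middle
product being empty). -/
theorem stmt_3
    {V : Type*} [Fintype V] [DecidableEq V]
    (G : SimpleGraph V)
    (N : ℕ) (hN : 1 ≤ N)
    (C : ℕ → Finset V) (D : ℕ → V)
    (hcover : ∀ w : V, ∃ k, 1 ≤ k ∧ k ≤ N ∧ w ∈ C k)
    (hCne : ∀ k, 1 ≤ k → k ≤ N → (C k).Nonempty)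
    (hRIP : ∀ k, 2 ≤ k → k ≤ N → C k ∩ (Finset.Icc 1 (k-1)).biUnion C = {D k})
    (hG : ∀ a b : V, G.Adj a b ↔ (a ≠ b ∧ ∃ k, 1 ≤ k ∧ k ≤ N ∧ a ∈ C k ∧ b ∈ C k))
    (gC : ℕ → (V → ℝ) → ℝ)
    (hloc : ∀ k, 1 ≤ k → k ≤ N → ∀ x y : V → ℝ, (∀ w ∈ C k, x w = y w) → gC k x = gC k y)
    (hcont : ∀ k, 1 ≤ k → k ≤ N → Continuous (gC k))
    (hhom : ∀ k, 1 ≤ k → k ≤ N → ∀ t : ℝ, 0 ≤ t → ∀ x : V → ℝ,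
      gC k (t • x) = t * gC k x)
    (hmax : ∀ k, 1 ≤ k → k ≤ N → ∀ x : V → ℝ, ∀ w ∈ C k, |x w| ≤ gC k x)
    (g : (V → ℝ) → ℝ)
    (hg : ∀ x, g x = (∑ k ∈ Finset.Icc 1 N, gC k x) - ∑ k ∈ Finset.Icc 2 N, |x (D k)|)
    (biv : V → V → ℝ → ℝ → ℝ)
    (hbiv : ∀ a b : V, ∀ u y : ℝ, biv a b u y =
      sInf {r | ∃ z : V → ℝ, z a = u ∧ z b = y ∧ r = g z})
    (alpha : ℝ → V → V → ℝ)
    (halpha : ∀ s : ℝ, s = 1 ∨ s = -1 → ∀ a b : V, a ≠ b →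
      IsGreatest {y | y ∈ Set.Icc (-1:ℝ) 1 ∧ biv a b s y = 1} (alpha s a b))
    (hfull : ∀ s : ℝ, s = 1 ∨ s = -1 → ∀ a : V,
      g (fun w => if w = a then s else alpha s a w) = 1)
    (i j : V) (hij : i ≠ j)
    (m : ℕ) (hm : 2 ≤ m) (v : ℕ → V)
    (hv0 : v 0 = i) (hvm : v m = j)
    (hadj : ∀ t < m, G.Adj (v t) (v (t+1)))
    (hshort : G.dist i j = m) :
    alpha 1 i j =
      |alpha 1 i (v 1)| *
      (∏ t ∈ Finset.Icc 2 (m-1),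
        |alpha (Real.sign (alpha 1 i (v (t-1)))) (v (t-1)) (v t)|) *
      alpha (Real.sign (alpha 1 i (v (m-1)))) (v (m-1)) j := by
  subst hv0 hvm
  have hgmax : ∀ x w, |x w| ≤ g x := by
    intro x w
    obtain ⟨k, h1, h2, hw⟩ := hcover w
    rw [hg]
    exact abs_le_gauge C D gC x N hRIP (fun k h1 h2 => hmax k h1 h2 x) k h1 h2 w hw
  have hghom : ∀ t : ℝ, 0 ≤ t → ∀ x, g (t • x) = t * g x := by
    intro t ht x
    rw [hg, hg, mul_sub, Finset.mul_sum, Finset.mul_sum]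
    congr 1
    · refine Finset.sum_congr rfl fun k hk => ?_
      obtain ⟨h1, h2⟩ := Finset.mem_Icc.1 hk
      exact hhom k h1 h2 t ht x
    · refine Finset.sum_congr rfl fun k _ => ?_
      simp [abs_mul, abs_of_nonneg ht]
  have hα : ∀ s : ℝ, s = 1 ∨ s = -1 → ∀ a b : V, a ≠ b → ∀ z : V → ℝ, z a = s → g z = 1 →
      z b ≤ alpha s a b := by
    intro s hs a b hab z hza hgz
    refine (halpha s hs a b hab).2 ⟨?_, ?_⟩
    · have := hgmax z b
      rw [hgz] at this
      exact abs_le.1 this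
    · -- the infimum is attained at `z`, since `g` dominates the coordinate `|s| = 1`
      rw [hbiv]
      refine IsLeast.csInf_eq ⟨⟨z, hza, rfl, hgz.symm⟩, ?_⟩
      rintro r ⟨z', hz', -, rfl⟩
      have := hgmax z' a
      rw [hz'] at this
      rcases hs with rfl | rfl <;> simpa using this
  have hlen := le_length_of_geodesic G v m hadj hshort
  have hne : ∀ a b, a < b → b ≤ m → v a ≠ v b := by
    intro a b hab hb he
    have := hlen a b hb (by omega) (SimpleGraph.Walk.nil.copy rfl he)
    simp at this
    omega
  have hnadj : ∀ a b, a + 1 < b → b ≤ m → ¬ G.Adj (v a) (v b) := by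
    intro a b hab hb he
    have := hlen a b hb (by omega) he.toWalk
    simp at this
    omega
  have hstep : ∀ t, 2 ≤ t → t ≤ m → alpha 1 (v 0) (v t) =
      |alpha 1 (v 0) (v (t-1))| * alpha (Real.sign (alpha 1 (v 0) (v (t-1)))) (v (t-1)) (v t) := by
    intro t ht htm
    obtain ⟨n, rfl⟩ := Nat.exists_eq_add_of_le' ht
    rw [show n + 2 - 1 = n + 1 by omega]
    obtain ⟨f, -, hf, hsep⟩ := exists_separating_label C D (v (n+1)) N hRIP
    have hconst : ∀ k ≤ n, f (v k) = f (v 0) := by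
      intro k hk
      induction k with
      | zero => rfl
      | succ k ih =>
        rw [← ih (by omega)]
        obtain ⟨-, r, h1, h2, h3, h4⟩ := (hG _ _).1 (hadj k (by omega))
        exact hf r h1 h2 _ h4 _ h3 (hne _ _ (by omega) (by omega)) (hne _ _ (by omega) (by omega))
    have hdiff : f (v (n+2)) ≠ f (v 0) := by
      rw [← hconst n le_rfl]
      intro he
      obtain ⟨-, r, h1, h2, h3, h4⟩ := (hG _ _).1 (hadj n (by omega))
      obtain ⟨-, l, k1, k2, k3, k4⟩ := (hG _ _).1 (hadj (n+1) (by omega))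
      obtain ⟨c, c1, c2, c3, c4⟩ := hsep r l h1 h2 k1 k2 h4 k3 _ h3 _ k4
        (hne _ _ (by omega) (by omega)) (hne _ _ (by omega) htm).symm he.symm
      exact hnadj n (n+2) (by omega) htm
        ((hG _ _).2 ⟨hne _ _ (by omega) htm, c, c1, c2, c3, c4⟩)
    exact alpha_eq_of_glue g hgmax hghom alpha hα hfull (v 0) (v (n+1)) (v (n+2))
      (hne _ _ (by omega) (by omega)) (hne _ _ (by omega) htm) (hne _ _ (by omega) htm)
      (fun w => f w = f (v 0)) rfl hdiff
      (gauge_glue C D gC N hloc g hg _ _ (fun k h1 h2 a ha b hb has hbs => by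
        rw [hf k h1 h2 a ha b hb has hbs]))
  have hprod : ∀ n, n + 1 ≤ m → |alpha 1 (v 0) (v (n+1))| = |alpha 1 (v 0) (v 1)| *
      ∏ t ∈ Finset.Icc 2 (n+1),
        |alpha (Real.sign (alpha 1 (v 0) (v (t-1)))) (v (t-1)) (v t)| := by
    intro n hn
    induction n with
    | zero => simp
    | succ n ih =>
      rw [Finset.prod_Icc_succ_top (by omega), ← mul_assoc, ← ih (by omega),
        hstep (n+1+1) (by omega) hn, abs_mul, abs_abs, Nat.add_sub_cancel]
  obtain ⟨n, rfl⟩ := Nat.exists_eq_add_of_le' hm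
  rw [show n + 2 - 1 = n + 1 by omega, ← hprod n (by omega)]
  exact hstep (n+2) hm le_rfl
end

section
/- Under the hypotheses of the β-recurrence result on a block graph (edge regular-variation assumption and chain identities along shortest paths), let i, j be distinct vertices with shortest path {i = v_0, v_1, …, v_m = j}, m ≥ 2, and suppose every pathwise coefficient is strictly positive: min_{k=1,…,m} α_{v_k|v_{k−1}} > 0. Then β_{j|i} = max_{k=1,…,m} β_{v_k|v_{k−1}}; that is, x ↦ g_{{i,j}}(1, α_{j|i} + x) − 1 is regularly varying at 0+ with index 1/(1 − max_k β_{v_k|v_{k−1}}). -/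
/-!
The excess `x ↦ biv i (v t) 1 (α + x) - 1`, with `α = alpha i (v t)`, is followed along the path.
By the chain identity, `biv i (v (t+1)) 1 w` is the infimum over `s ≥ 0` of
`biv i (v t) 1 s + biv (v t) (v (t+1)) s w - s`, and the only zero of the excess at
`w = α * alpha (v t) (v (t+1))` is `s = α`. Hence the critical points multiply, and near the new
critical point the new excess is asymptotically an infimal convolution
`inf {A p + B q | p + q ≥ x}` of rescalings of the old excess and of the edge excess (`reg_step`).
Positivity of all the critical points is what puts both terms on the same scale `x`.

An infimal convolution of functions of indices `σA ≤ σB` has index `σB` (`potter_infconv`). If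
`σA < σB`, then `A` dominates `B` at comparable arguments (`Reg.dominate`), so it is optimal to put
the mass on `q`. If the indices agree, rescaling a near-optimal `(p, q)` by `l` multiplies its cost
by about `l ^ σ`. The two functions need not be asymptotically comparable, so no limit of their
ratio is used; only an upper bound on `F (l x) / F x` for every `l` is proved, and the lower bound
comes from replacing `l` by `l⁻¹` (`Reg.rv0`).

These arguments need regular variation to be uniform in `l` and one-sidedly monotone. For the
edges, where continuity is available, this is derived from pointwise regular variation by the Baire
category theorem (`potter_of_rv0`). The resulting property `Reg`, not bare regular variation, is
what is propagated along the path, and near-minimisers take the place of minimisers throughout.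
Finally `β ↦ 1 / (1 - β)` is increasing, so the maximum of the indices corresponds to the maximum
of the `β`.
-/

open Filter Topology

/-- Regular variation at `0⁺` with index `σ`. -/
def RV0 (F : ℝ → ℝ) (σ : ℝ) : Prop :=
  ∀ l : ℝ, 0 < l →
    Filter.Tendsto (fun x => F (l * x) / F x) (nhdsWithin 0 (Set.Ioi 0)) (nhds (l ^ σ))

/-! ### Uniform regular variation at zero -/

/-- Quantitative form of "regularly varying at `0⁺` with index `σ > 0`", strong enough to pass
through an infimal convolution: `F` vanishes at `0`, is bounded away from zero off `0`, tends to
zero at `0⁺`, and satisfies the one-sided uniform (Potter-type) bound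
`F x' ≤ K * F x` for all `x' ≤ l * x`, `x` small, whenever `l ^ σ < K`. -/
structure Reg (F : ℝ → ℝ) (σ : ℝ) : Prop where
  zero : F 0 = 0
  low : ∀ η > 0, ∃ c > 0, ∀ x, η ≤ x → c ≤ F x
  tend : ∀ ε > 0, ∃ δ > 0, ∀ x, 0 < x → x < δ → F x < ε
  potter : ∀ l > 0, ∀ K, l ^ σ < K → ∃ δ > 0, ∀ x, 0 < x → x < δ →
    ∀ x', 0 < x' → x' ≤ l * x → F x' ≤ K * F x

lemma Reg.pos {F : ℝ → ℝ} {σ : ℝ} (h : Reg F σ) {x : ℝ} (hx : 0 < x) : 0 < F x := by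
  obtain ⟨c, hc, H⟩ := h.low x hx
  exact hc.trans_le (H x le_rfl)

lemma Reg.nonneg {F : ℝ → ℝ} {σ : ℝ} (h : Reg F σ) {x : ℝ} (hx : 0 ≤ x) : 0 ≤ F x := by
  rcases hx.eq_or_lt with rfl | hx
  · rw [h.zero]
  · exact (h.pos hx).le

/-- Upper bounds for every `l` suffice: the lower bound at `l` is the upper bound at `l⁻¹`. -/
lemma Reg.rv0 {F : ℝ → ℝ} {σ : ℝ} (h : Reg F σ) : RV0 F σ := by
  intro l hl
  have hls : 0 < l ^ σ := Real.rpow_pos_of_pos hl σ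
  refine tendsto_order.2 ⟨fun k hk => ?_, fun K hK => ?_⟩
  · obtain ⟨k', hk1, hk2⟩ := exists_between (max_lt hk hls)
    have hk0 : 0 < k' := (le_max_right _ _).trans_lt hk1
    have hkk : k < k' := (le_max_left _ _).trans_lt hk1
    obtain ⟨δ, hδ, H⟩ := h.potter l⁻¹ (inv_pos.2 hl) k'⁻¹ (by
      rw [Real.inv_rpow hl.le]
      exact inv_strictAnti₀ hk0 hk2)
    filter_upwards [Ioo_mem_nhdsGT (show (0:ℝ) < δ / l by positivity)] with x hx
    have hx0 : 0 < x := hx.1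
    have := H (l * x) (by positivity) (by
      have := (lt_div_iff₀ hl).1 hx.2
      linarith) x hx0 (by field_simp; rfl)
    have hF := h.pos hx0
    rw [inv_mul_eq_div, le_div_iff₀ hk0] at this
    rw [lt_div_iff₀ hF]
    nlinarith
  · obtain ⟨K', hK1, hK2⟩ := exists_between hK
    obtain ⟨δ, hδ, H⟩ := h.potter l hl K' hK1
    filter_upwards [Ioo_mem_nhdsGT hδ] with x hx
    have hx0 : 0 < x := hx.1
    have := H x hx0 hx.2 (l * x) (by positivity) le_rfl
    have hF := h.pos hx0
    rw [div_lt_iff₀ hF]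
    nlinarith

lemma Reg.scale {F : ℝ → ℝ} {σ : ℝ} (h : Reg F σ) {c d : ℝ} (hc : 0 < c) (hd : 0 < d) :
    Reg (fun x => c * F (x / d)) σ where
  zero := by simp [h.zero]
  low := fun η hη => by
    obtain ⟨b, hb, H⟩ := h.low (η / d) (by positivity)
    exact ⟨c * b, by positivity, fun x hx => by
      have := H (x / d) (by gcongr)
      gcongr⟩
  tend := fun ε hε => by
    obtain ⟨δ, hδ, H⟩ := h.tend (ε / c) (by positivity)
    refine ⟨δ * d, by positivity, fun x hx hx' => ?_⟩
    have := H (x / d) (by positivity) (by rwa [div_lt_iff₀ hd])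
    rw [lt_div_iff₀ hc] at this
    linarith
  potter := fun l hl K hK => by
    obtain ⟨δ, hδ, H⟩ := h.potter l hl K hK
    refine ⟨δ * d, by positivity, fun x hx hx' x' hx0 hxl => ?_⟩
    have := H (x / d) (by positivity) (by rwa [div_lt_iff₀ hd]) (x' / d) (by positivity)
      (by rw [← mul_div_assoc]; gcongr)
    calc c * F (x' / d) ≤ c * (K * F (x / d)) := by gcongr
      _ = K * (c * F (x / d)) := by ring

/-! ### The uniform convergence theorem -/

/-- Local one-sided uniformity in the additive (logarithmic) scale, by the Baire category
theorem: convergence `k (s + v) - k s → -σ v` for every `v` is uniform for `v` in some interval,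
and differencing moves that interval to the origin. -/
lemma baire_local {k : ℝ → ℝ} {σ : ℝ} (hk : Continuous k)
    (hlim : ∀ v, Tendsto (fun s => k (s + v) - k s) atTop (𝓝 (-(σ * v)))) {ε : ℝ} (hε : 0 < ε)
    (hσ : 0 ≤ σ) :
    ∃ d > 0, ∃ S, ∀ s ≥ S, ∀ w, 0 ≤ w → w ≤ d → k (s + w) ≤ k s + ε := by
  let A : ℕ → Set ℝ := fun n => {v | ∀ s : ℝ, (n : ℝ) ≤ s → |k (s + v) - k s + σ * v| ≤ ε / 2}
  have hclosed : ∀ n, IsClosed (A n) := by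
    intro n
    simp only [A, Set.ofPred_forall]
    refine isClosed_iInter fun s => isClosed_iInter fun _ => ?_
    exact isClosed_le (by fun_prop) continuous_const
  have hU : ⋃ n, A n = Set.univ := by
    refine Set.eq_univ_of_forall fun v => ?_
    have h1 : ∀ᶠ s in atTop, |k (s + v) - k s + σ * v| ≤ ε / 2 := by
      have := Metric.tendsto_nhds.1 (hlim v) (ε / 2) (by positivity)
      filter_upwards [this] with s hs
      rw [Real.dist_eq, sub_neg_eq_add] at hs
      exact hs.le
    obtain ⟨S, hS⟩ := eventually_atTop.1 h1
    obtain ⟨n, hn⟩ := exists_nat_ge S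
    exact Set.mem_iUnion.2 ⟨n, fun s hs => hS s (hn.trans hs)⟩
  obtain ⟨n, v0, hv0⟩ := nonempty_interior_of_iUnion_of_closed hclosed hU
  obtain ⟨r, hr, hball⟩ := Metric.mem_nhds_iff.1 (mem_interior_iff_mem_nhds.1 hv0)
  refine ⟨r / 2, by positivity, n + v0, fun s hs w hw0 hwd => ?_⟩
  have h1 := hball (Metric.mem_ball_self hr) (s - v0) (by linarith)
  have h2 := hball (show v0 + w ∈ Metric.ball v0 r by
    rw [Metric.mem_ball, Real.dist_eq, add_sub_cancel_left, abs_of_nonneg hw0]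
    linarith) (s - v0) (by linarith)
  rw [show s - v0 + v0 = s by ring] at h1
  rw [show s - v0 + (v0 + w) = s + w by ring] at h2
  have := abs_le.1 h1
  have := abs_le.1 h2
  nlinarith [mul_nonneg hσ hw0]

/-- Potter-type bound in the additive scale: a shift by `v ≥ v₀` is split into `v₀`, a multiple
of a fixed step along which `k` decreases, and a remainder controlled by `baire_local`. -/
lemma additive_potter {k : ℝ → ℝ} {σ : ℝ} (hk : Continuous k)
    (hlim : ∀ v, Tendsto (fun s => k (s + v) - k s) atTop (𝓝 (-(σ * v)))) (hσ : 0 < σ)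
    (v0 : ℝ) {L : ℝ} (hL : -(σ * v0) < L) :
    ∃ S, ∀ s ≥ S, ∀ v ≥ v0, k (s + v) ≤ k s + L := by
  set ε := (L + σ * v0) / 2 with hε
  have hε0 : 0 < ε := by rw [hε]; linarith
  obtain ⟨d, hd, S1, h1⟩ := baire_local hk hlim hε0 hσ.le
  obtain ⟨S2, h2⟩ := eventually_atTop.1 ((hlim d).eventually_lt_const
    (show -(σ * d) < 0 by nlinarith))
  obtain ⟨S3, h3⟩ := eventually_atTop.1 ((hlim v0).eventually_lt_const
    (show -(σ * v0) < -(σ * v0) + ε by linarith))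
  have hstep : ∀ n : ℕ, ∀ s ≥ S2, k (s + n * d) ≤ k s := by
    intro n
    induction n with
    | zero => intro s _; simp
    | succ n ih =>
      intro s hs
      have e1 := ih s hs
      have hnd : 0 ≤ (n : ℝ) * d := by positivity
      have e2 := h2 (s + n * d) (by linarith)
      have e3 : s + ((n + 1 : ℕ) : ℝ) * d = s + n * d + d := by push_cast; ring
      rw [e3]
      linarith
  refine ⟨max S3 (max (S1 - v0) (S2 - v0)), fun s hs v hv => ?_⟩
  have hs3 : S3 ≤ s := (le_max_left _ _).trans hs
  have hs1 : S1 - v0 ≤ s := (le_max_left _ _).trans ((le_max_right _ _).trans hs)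
  have hs2 : S2 - v0 ≤ s := (le_max_right _ _).trans ((le_max_right _ _).trans hs)
  set n := ⌊(v - v0) / d⌋₊
  have hn1 : (n : ℝ) * d ≤ v - v0 := by
    rw [← le_div_iff₀ hd]
    exact Nat.floor_le (div_nonneg (by linarith) hd.le)
  have hn2 : v - v0 < (n + 1) * d := by
    rw [← div_lt_iff₀ hd]
    exact Nat.lt_floor_add_one _
  have hnd : 0 ≤ (n : ℝ) * d := by positivity
  have e1 := h1 (s + v0 + n * d) (by linarith) (v - v0 - n * d) (by linarith) (by linarith)
  have e2 := hstep n (s + v0) (by linarith)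
  have e3 := h3 s hs3
  rw [show s + v0 + n * d + (v - v0 - n * d) = s + v by ring] at e1
  linarith

/-- A continuous positive regularly varying function of positive index satisfies the uniform
one-sided bound. -/
lemma potter_of_rv0 {F : ℝ → ℝ} {σ : ℝ} (hσ : 0 < σ) (hc : ContinuousOn F (Set.Ioi 0))
    (hp : ∀ x, 0 < x → 0 < F x) (hrv : RV0 F σ) (l : ℝ) (hl : 0 < l) (K : ℝ) (hK : l ^ σ < K) :
    ∃ δ > 0, ∀ x, 0 < x → x < δ → ∀ x', 0 < x' → x' ≤ l * x → F x' ≤ K * F x := by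
  let k : ℝ → ℝ := fun s => Real.log (F (Real.exp (-s)))
  have hk : Continuous k := by
    refine Continuous.log ?_ fun s => (hp _ (Real.exp_pos _)).ne'
    exact hc.comp_continuous (by fun_prop) fun s => Real.exp_pos _
  have hlim : ∀ v, Tendsto (fun s => k (s + v) - k s) atTop (𝓝 (-(σ * v))) := by
    intro v
    have h0 : Tendsto (fun s : ℝ => Real.exp (-s)) atTop (𝓝[>] 0) :=
      tendsto_nhdsWithin_iff.2 ⟨Real.tendsto_exp_neg_atTop_nhds_zero,
        Eventually.of_forall fun s => Real.exp_pos _⟩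
    have h1 := (hrv (Real.exp (-v)) (Real.exp_pos _)).comp h0
    have h2 := h1.log (Real.rpow_pos_of_pos (Real.exp_pos _) _).ne'
    rw [Real.log_rpow (Real.exp_pos _), Real.log_exp, mul_neg] at h2
    refine h2.congr fun s => ?_
    simp only [Function.comp, k]
    rw [← Real.exp_add, Real.log_div (hp _ (Real.exp_pos _)).ne' (hp _ (Real.exp_pos _)).ne',
      show -v + -s = -(s + v) by ring]
  have hls : 0 < l ^ σ := Real.rpow_pos_of_pos hl σ
  have hK0 : 0 < K := hls.trans hK
  obtain ⟨S, hS⟩ := additive_potter hk hlim hσ (-Real.log l) (L := Real.log K) (by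
    have := Real.log_lt_log hls hK
    rw [Real.log_rpow hl] at this
    linarith)
  refine ⟨Real.exp (-S), Real.exp_pos _, fun x hx hxδ x' hx' hxl => ?_⟩
  have e1 : Real.log x < -S := by
    rw [← Real.log_exp (-S)]
    exact Real.log_lt_log hx hxδ
  have e2 : Real.log x' ≤ Real.log l + Real.log x := by
    rw [← Real.log_mul hl.ne' hx.ne']
    exact Real.log_le_log hx' hxl
  have := hS (-Real.log x) (by linarith) (Real.log x - Real.log x') (by
    show -Real.log l ≤ _
    linarith)
  simp only [k] at this
  rw [show -(-Real.log x + (Real.log x - Real.log x')) = Real.log x' by ring, neg_neg,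
    Real.exp_log hx, Real.exp_log hx', add_comm, ← Real.log_mul hK0.ne' (hp x hx).ne'] at this
  exact (Real.log_le_log_iff (hp x' hx') (mul_pos hK0 (hp x hx))).1 this

/-! ### Domination and infimal convolution -/

/-- A function of strictly larger index is negligible, uniformly over comparable arguments. -/
lemma Reg.dominate {A B : ℝ → ℝ} {σA σB : ℝ} (hA : Reg A σA) (hB : Reg B σB) (h : σA < σB)
    (C : ℝ) (hC : 0 < C) (ε : ℝ) (hε : 0 < ε) :
    ∃ δ > 0, ∀ p, 0 < p → p < δ → ∀ q, 0 < q → q ≤ C * p → B q ≤ ε * A p := by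
  obtain ⟨r1, h1, h1B⟩ := exists_between h
  obtain ⟨r2, h12, h2⟩ := exists_between h1B
  obtain ⟨d1, hd1, P1⟩ := hA.potter 2 two_pos (2 ^ r1)
    (Real.rpow_lt_rpow_of_exponent_lt one_lt_two h1)
  obtain ⟨d2, hd2, P2⟩ := hB.potter (1 / 2) (by norm_num) ((1 / 2) ^ r2)
    (Real.rpow_lt_rpow_of_exponent_gt (by norm_num) (by norm_num) h2)
  obtain ⟨d3, hd3, P3⟩ := hB.potter 1 one_pos 2 (by rw [Real.one_rpow]; norm_num)
  obtain ⟨d4, hd4, P4⟩ := hB.potter C hC (C ^ σB + 1) (by linarith)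
  have hCs : 0 < C ^ σB := Real.rpow_pos_of_pos hC _
  obtain ⟨x0, hx0, hx0'⟩ := exists_between (lt_min (lt_min hd1 hd2) (lt_min hd3 hd4))
  simp only [lt_min_iff] at hx0'
  obtain ⟨⟨l1, l2⟩, l3, l4⟩ := hx0'
  set θ : ℝ := (1 / 2) ^ r2 * 2 ^ r1 with hθ
  have hθ0 : 0 < θ := by positivity
  have hθ1 : θ < 1 := by
    have e : ((1 : ℝ) / 2) ^ r2 = (2 ^ r2)⁻¹ := by
      rw [one_div, Real.inv_rpow two_pos.le]
    rw [hθ, e, inv_mul_lt_one₀ (by positivity)]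
    exact Real.rpow_lt_rpow_of_exponent_lt one_lt_two h12
  have hAx0 := hA.pos hx0
  have hBx0 := hB.pos hx0
  set M : ℝ := 2 * B x0 / A x0 * 2 ^ r1 with hM
  have hM0 : 0 < M := by positivity
  -- geometric decay of `B / A` along dyadic shells
  have key : ∀ n : ℕ, ∀ p, (1 / 2) ^ (n + 1) * x0 < p → p ≤ (1 / 2) ^ n * x0 →
      B p ≤ θ ^ n * M * A p := by
    intro n
    induction n with
    | zero =>
      intro p hp1 hp2
      norm_num at hp1 hp2
      have hp0 : 0 < p := by linarith
      have e1 := P3 x0 hx0 l3 p hp0 (by linarith)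
      have e2 := P1 p hp0 (by linarith) x0 hx0 (by linarith)
      calc B p ≤ 2 * B x0 := e1
        _ = 2 * B x0 / A x0 * A x0 := by field_simp
        _ ≤ 2 * B x0 / A x0 * (2 ^ r1 * A p) := by gcongr
        _ = θ ^ 0 * M * A p := by rw [hM]; ring
    | succ n ih =>
      intro p hp1 hp2
      have hp0 : 0 < p := lt_trans (by positivity) hp1
      have hle : ((1 : ℝ) / 2) ^ n * x0 ≤ x0 :=
        mul_le_of_le_one_left hx0.le (pow_le_one₀ (by norm_num) (by norm_num))
      have h2p : 2 * p ≤ (1 / 2) ^ n * x0 := by rw [pow_succ] at hp2; linarith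
      have e0 := ih (2 * p) (by rw [pow_succ] at hp1; linarith) h2p
      have e1 := P2 (2 * p) (by linarith) (by linarith) p hp0 (by linarith)
      have e2 := P1 p hp0 (by linarith) (2 * p) (by linarith) le_rfl
      calc B p ≤ (1 / 2) ^ r2 * B (2 * p) := e1
        _ ≤ (1 / 2) ^ r2 * (θ ^ n * M * (2 ^ r1 * A p)) := by
            gcongr
            exact e0.trans (by gcongr)
        _ = θ ^ (n + 1) * M * A p := by rw [pow_succ, hθ]; ring
  obtain ⟨n0, hn0⟩ := exists_pow_lt_of_lt_one
    (show 0 < ε / ((C ^ σB + 1) * M) by positivity) hθ1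
  refine ⟨(1 / 2) ^ n0 * x0, by positivity, fun p hp hpd q hq hqp => ?_⟩
  have hle : ((1 : ℝ) / 2) ^ n0 * x0 ≤ x0 :=
    mul_le_of_le_one_left hx0.le (pow_le_one₀ (by norm_num) (by norm_num))
  obtain ⟨n, hn1, hn2⟩ := exists_nat_pow_near_of_lt_one (x := p / x0) (y := 1 / 2)
    (by positivity) ((div_le_one hx0).2 (by linarith)) (by norm_num) (by norm_num)
  rw [lt_div_iff₀ hx0] at hn1
  rw [div_le_iff₀ hx0] at hn2
  have hnn : n0 ≤ n := by
    by_contra hcon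
    have : ((1 : ℝ) / 2) ^ n0 ≤ (1 / 2) ^ (n + 1) :=
      pow_le_pow_of_le_one (by norm_num) (by norm_num) (by omega)
    nlinarith
  have e1 := P4 p hp (by linarith) q hq hqp
  have e2 := key n p hn1 hn2
  have e3 : θ ^ n ≤ ε / ((C ^ σB + 1) * M) :=
    (pow_le_pow_of_le_one hθ0.le hθ1.le hnn).trans hn0.le
  have hAp := hA.pos hp
  calc B q ≤ (C ^ σB + 1) * B p := e1
    _ ≤ (C ^ σB + 1) * (θ ^ n * M * A p) := by gcongr
    _ ≤ (C ^ σB + 1) * (ε / ((C ^ σB + 1) * M) * M * A p) := by gcongr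
    _ = ε * A p := by field_simp

/-- `F` is asymptotically the infimal convolution `inf {A p + B q | p + q ≥ x}`; it inherits the
uniform bound with the larger index. For equal indices both components of a near-optimal
`(p, q)` are rescaled. For `σA < σB`, either `p` is a small fraction of `x` and only `q` matters,
or `A p` dominates `B` at scale `x`. -/
lemma potter_infconv {A B F : ℝ → ℝ} {σA σB : ℝ} (hA : Reg A σA) (hB : Reg B σB)
    (h : σA ≤ σB)
    (hU : ∀ κ > 1, ∃ δ > 0, ∀ x, 0 < x → x < δ → ∀ p q, 0 ≤ p → p < δ → 0 ≤ q → q < δ →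
      x ≤ p + q → F x ≤ κ * (A p + B q))
    (hL : ∀ κ > 1, ∀ η > 0, ∃ δ > 0, ∀ x, 0 < x → x < δ → ∃ p q, 0 ≤ p ∧ p < η ∧ 0 ≤ q ∧ q < η ∧
      x ≤ κ * (p + q) ∧ A p + B q ≤ κ * F x)
    (l : ℝ) (hl : 0 < l) (K : ℝ) (hK : l ^ σB < K) :
    ∃ δ > 0, ∀ x, 0 < x → x < δ → ∀ x', 0 < x' → x' ≤ l * x → F x' ≤ K * F x := by
  obtain ⟨κ, hκK, hκ1⟩ : ∃ κ : ℝ, κ ^ 3 * (κ ^ 2 * l) ^ σB < K ∧ 1 < κ := by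
    have hc : ContinuousAt (fun κ : ℝ => κ ^ 3 * (κ ^ 2 * l) ^ σB) 1 := by
      refine ContinuousAt.mul (by fun_prop) (ContinuousAt.rpow_const (by fun_prop) ?_)
      left; simpa using hl.ne'
    have h1 : ∀ᶠ κ in 𝓝 (1 : ℝ), κ ^ 3 * (κ ^ 2 * l) ^ σB < K :=
      hc.eventually_lt_const (by simpa using hK)
    have h2 : ∀ᶠ κ in 𝓝[>] (1 : ℝ), κ ^ 3 * (κ ^ 2 * l) ^ σB < K :=
      h1.filter_mono nhdsWithin_le_nhds
    exact (h2.and self_mem_nhdsWithin).exists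
  have hκ0 : 0 < κ := by linarith
  set m : ℝ := κ ^ 2 * l with hm
  have hm0 : 0 < m := by positivity
  have hms : 0 < m ^ σB := Real.rpow_pos_of_pos hm0 _
  have hK0 : 0 < K := lt_trans (by positivity) hκK
  obtain ⟨dU, hdU, U⟩ := hU κ hκ1
  obtain ⟨dB, hdB, PB⟩ := hB.potter m hm0 (κ * m ^ σB) (by nlinarith)
  rcases h.eq_or_lt with rfl | hlt
  · obtain ⟨dA, hdA, PA⟩ := hA.potter m hm0 (κ * m ^ σA) (by nlinarith)
    obtain ⟨dL, hdL, L⟩ := hL κ hκ1 (min (min dA dB) (dU / m)) (by positivity)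
    refine ⟨min dL (dU / l), by positivity, fun x hx hxd x' hx' hxl => ?_⟩
    rw [lt_min_iff, lt_div_iff₀ hl] at hxd
    obtain ⟨p, q, hp, hpη, hq, hqη, hpq, hABF⟩ := L x hx hxd.1
    simp only [lt_min_iff, lt_div_iff₀ hm0] at hpη hqη
    have e1 : A (m * p) ≤ κ * m ^ σA * A p := by
      rcases hp.eq_or_lt with rfl | hp
      · simp [hA.zero]
      · exact PA p hp hpη.1.1 _ (by positivity) le_rfl
    have e2 : B (m * q) ≤ κ * m ^ σA * B q := by
      rcases hq.eq_or_lt with rfl | hq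
      · simp [hB.zero]
      · exact PB q hq hqη.1.2 _ (by positivity) le_rfl
    have e3 := U x' hx' (by linarith) (m * p) (m * q) (by positivity) (by linarith)
      (by positivity) (by linarith) (by
        calc x' ≤ l * x := hxl
          _ ≤ l * (κ * (p + q)) := by gcongr
          _ ≤ κ * (l * (κ * (p + q))) := le_mul_of_one_le_left (by positivity) hκ1.le
          _ = m * p + m * q := by rw [hm]; ring)
    have hF : 0 ≤ F x := by
      have : 0 ≤ κ * F x := (add_nonneg (hA.nonneg hp) (hB.nonneg hq)).trans hABF
      exact nonneg_of_mul_nonneg_right this hκ0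
    calc F x' ≤ κ * (A (m * p) + B (m * q)) := e3
      _ ≤ κ * (κ * m ^ σA * A p + κ * m ^ σA * B q) := by gcongr
      _ = κ ^ 2 * m ^ σA * (A p + B q) := by ring
      _ ≤ κ ^ 2 * m ^ σA * (κ * F x) := by gcongr
      _ = κ ^ 3 * m ^ σA * F x := by ring
      _ ≤ K * F x := by gcongr
  · -- the threshold is chosen so that `p ≤ θ x` and `x ≤ κ (p + q)` give `x ≤ κ² q`
    set θ : ℝ := (κ - 1) / κ ^ 2 with hθ
    have hθ0 : 0 < θ := div_pos (by linarith) (by positivity)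
    obtain ⟨dD, hdD, PD⟩ := hA.dominate hB hlt (l / θ) (by positivity) (K / κ ^ 2) (by positivity)
    obtain ⟨dL, hdL, L⟩ := hL κ hκ1 (min (min dD dB) (dU / m)) (by positivity)
    refine ⟨min dL (dU / l), by positivity, fun x hx hxd x' hx' hxl => ?_⟩
    rw [lt_min_iff, lt_div_iff₀ hl] at hxd
    obtain ⟨p, q, hp, hpη, hq, hqη, hpq, hABF⟩ := L x hx hxd.1
    simp only [lt_min_iff, lt_div_iff₀ hm0] at hpη hqη
    have hAp := hA.nonneg hp
    have hBq := hB.nonneg hq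
    have hF : 0 ≤ F x := by
      have : 0 ≤ κ * F x := (add_nonneg hAp hBq).trans hABF
      exact nonneg_of_mul_nonneg_right this hκ0
    rcases le_or_gt p (θ * x) with hpθ | hpθ
    · have hxq : x ≤ κ ^ 2 * q := by
        have h1 : κ ^ 2 * p ≤ (κ - 1) * x := by
          calc κ ^ 2 * p ≤ κ ^ 2 * (θ * x) := by gcongr
            _ = (κ - 1) * x := by rw [hθ]; field_simp
        have h2 : κ * x ≤ κ ^ 2 * p + κ ^ 2 * q := by
          calc κ * x ≤ κ * (κ * (p + q)) := by gcongr
            _ = _ := by ring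
        linarith
      have hq0 : 0 < q := by
        by_contra hcon
        have : κ ^ 2 * q ≤ 0 := mul_nonpos_of_nonneg_of_nonpos (by positivity) (by linarith)
        linarith
      have e2 := PB q hq0 hqη.1.2 (m * q) (by positivity) le_rfl
      have e3 := U x' hx' (by linarith) 0 (m * q) le_rfl hdU
        (by positivity) (by linarith) (by
          calc x' ≤ l * x := hxl
            _ ≤ l * (κ ^ 2 * q) := by gcongr
            _ = 0 + m * q := by rw [hm]; ring)
      rw [hA.zero, zero_add] at e3
      calc F x' ≤ κ * B (m * q) := e3
        _ ≤ κ * (κ * m ^ σB * B q) := by gcongr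
        _ = κ ^ 2 * m ^ σB * B q := by ring
        _ ≤ κ ^ 2 * m ^ σB * (κ * F x) := by gcongr; linarith
        _ = κ ^ 3 * m ^ σB * F x := by ring
        _ ≤ K * F x := by gcongr
    · have hp0 : 0 < p := lt_trans (by positivity) hpθ
      have e2 := PD p hp0 hpη.1.1 x' hx' (by
        calc x' ≤ l * x := hxl
          _ = l / θ * (θ * x) := by field_simp
          _ ≤ l / θ * p := by gcongr)
      have e3 := U x' hx' (by linarith) 0 x' le_rfl hdU hx'.le (by linarith) (by linarith)
      rw [hA.zero, zero_add] at e3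
      calc F x' ≤ κ * B x' := e3
        _ ≤ κ * (K / κ ^ 2 * A p) := by gcongr
        _ ≤ κ * (K / κ ^ 2 * (κ * F x)) := by gcongr; linarith
        _ = K * F x := by field_simp

/-! ### Adding one edge to the path -/

lemma edge_eq {e : ℝ → ℝ → ℝ} {E : ℝ → ℝ} {a : ℝ}
    (hehom : ∀ t u y : ℝ, 0 ≤ t → 0 ≤ u → 0 ≤ y → e (t * u) (t * y) = t * e u y)
    (hE : ∀ y, e 1 (a + y) = 1 + E y) {s w : ℝ} (hs : 0 < s) (hw : 0 ≤ w) :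
    e s w - s = s * E (w / s - a) := by
  have h1 := hehom s 1 (w / s) hs.le zero_le_one (by positivity)
  rw [mul_one, mul_div_cancel₀ _ hs.ne'] at h1
  have h2 := hE (w / s - a)
  rw [add_sub_cancel] at h2
  rw [h1, h2]
  ring

/-- The edge excess `e s w - s` is bounded away from zero when `w / s` stays above `a` by a fixed
margin and `w` is bounded below, uniformly down to `s = 0`. -/
lemma edge_gap {e : ℝ → ℝ → ℝ} {E : ℝ → ℝ} {a b σ : ℝ} (hb : 0 < b)
    (hemax : ∀ s w : ℝ, 0 ≤ s → 0 ≤ w → max s w ≤ e s w)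
    (hehom : ∀ t u y : ℝ, 0 ≤ t → 0 ≤ u → 0 ≤ y → e (t * u) (t * y) = t * e u y)
    (hE : ∀ y, e 1 (a + y) = 1 + E y) (hER : Reg E σ) (ζ : ℝ) (hζ : 0 < ζ) :
    ∃ c > 0, ∀ s w, 0 ≤ s → b ≤ w → (a + ζ) * s ≤ w → c ≤ e s w - s := by
  obtain ⟨c, hc, Hc⟩ := hER.low ζ hζ
  refine ⟨min (b / 2) (b / 2 * c), by positivity, fun s w hs hw hsw => ?_⟩
  rcases le_or_gt s (w / 2) with h | h
  · have := (le_max_right _ _).trans (hemax s w hs (by linarith))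
    exact (min_le_left _ _).trans (by linarith)
  · have hs0 : 0 < s := by linarith
    rw [edge_eq hehom hE hs0 (by linarith)]
    have := Hc (w / s - a) (by
      rw [le_sub_iff_add_le, le_div_iff₀ hs0]
      linarith)
    refine (min_le_right _ _).trans ?_
    gcongr
    linarith

set_option maxHeartbeats 1000000 in
/-- One step along the path. If `k w = inf_s (h s + e s w - s)`, then near its critical point
`α * a` the excess of `k` is asymptotically the infimal convolution of the rescaled excesses
`p ↦ H (p / a)` and `q ↦ α * E (q / α)`: substituting `s = α + y` and
`z = (α * a + x) / s - a` turns the constraint into `a * y + s * z = x`, and a near-optimal `s`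
is close to `α`. -/
theorem reg_step {h k : ℝ → ℝ} {e : ℝ → ℝ → ℝ} {H E F : ℝ → ℝ} {α a σ₁ σ₂ : ℝ}
    (hα : 0 < α) (ha : 0 < a)
    (hh : ∀ s : ℝ, 0 ≤ s → 1 ≤ h s)
    (hemax : ∀ s w : ℝ, 0 ≤ s → 0 ≤ w → max s w ≤ e s w)
    (hehom : ∀ t u y : ℝ, 0 ≤ t → 0 ≤ u → 0 ≤ y → e (t * u) (t * y) = t * e u y)
    (hle : ∀ s w : ℝ, 0 ≤ s → 0 ≤ w → k w ≤ h s + e s w - s)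
    (happ : ∀ w : ℝ, 0 ≤ w → ∀ ε > 0, ∃ s, 0 ≤ s ∧ h s + e s w - s < k w + ε)
    (hH : ∀ y, h (α + y) = 1 + H y) (hE : ∀ y, e 1 (a + y) = 1 + E y)
    (hF : ∀ x, k (α * a + x) = 1 + F x)
    (hHR : Reg H σ₁) (hER : Reg E σ₂) :
    Reg F (max σ₁ σ₂) := by
  have hαa : 0 < α * a := by positivity
  have hes : ∀ s w : ℝ, 0 ≤ s → 0 ≤ w → 0 ≤ e s w - s := fun s w hs hw =>
    sub_nonneg.2 ((le_max_left _ _).trans (hemax s w hs hw))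
  have hgap := fun ζ hζ => edge_gap hαa hemax hehom hE hER ζ hζ
  have hHgap : ∀ η > 0, ∃ c > 0, ∀ s, α + η ≤ s → c ≤ h s - 1 := by
    intro η hη
    obtain ⟨c, hc, Hc⟩ := hHR.low η hη
    refine ⟨c, hc, fun s hs => ?_⟩
    have h1 := Hc (s - α) (by linarith)
    have h2 := hH (s - α)
    rw [add_sub_cancel] at h2
    linarith
  have hloc : ∀ η > 0, ∃ c > 0, ∀ x s, 0 ≤ x → 0 ≤ s → h s - 1 + (e s (α * a + x) - s) < c →
      α - η < s ∧ s < α + η := by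
    intro η hη
    obtain ⟨c₁, hc₁, H₁⟩ := hHgap η hη
    obtain ⟨c₂, hc₂, H₂⟩ := hgap (a * η / α) (by positivity)
    refine ⟨min c₁ c₂, lt_min hc₁ hc₂, fun x s hx hs hlt => ⟨?_, ?_⟩⟩
    · by_contra! hcon
      have h1 := H₂ s (α * a + x) hs (by linarith) (by
        have : (a + a * η / α) * s ≤ (a + a * η / α) * (α - η) := by gcongr
        have e1 : (a + a * η / α) * (α - η) = α * a - a * η * η / α := by field_simp; ring
        have : 0 ≤ a * η * η / α := by positivity
        linarith)
      have := hh s hs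
      have := hlt.trans_le (min_le_right _ _)
      linarith
    · by_contra! hcon
      have h1 := H₁ s hcon
      have := hes s (α * a + x) hs (by linarith)
      have := hlt.trans_le (min_le_left _ _)
      linarith
  have hlow : ∀ η > 0, ∃ c > 0, ∀ x, η ≤ x → c ≤ F x := by
    intro η hη
    obtain ⟨c₁, hc₁, H₁⟩ := hHgap (η / (2 * a)) (by positivity)
    obtain ⟨c₂, hc₂, H₂⟩ := hgap (η / 2 / (α + η / (2 * a))) (by positivity)
    refine ⟨min c₁ c₂, lt_min hc₁ hc₂, fun x hx => le_of_forall_pos_le_add fun ε hε => ?_⟩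
    obtain ⟨s, hs, hlt⟩ := happ (α * a + x) (by linarith) ε hε
    rw [hF] at hlt
    have h1 := hh s hs
    have h2 := hes s (α * a + x) hs (by linarith)
    rcases le_or_gt (α + η / (2 * a)) s with h | h
    · have := H₁ s h
      have := min_le_left c₁ c₂
      linarith
    · have := H₂ s (α * a + x) hs (by linarith) (by
        have h3 : (a + η / 2 / (α + η / (2 * a))) * s
            ≤ (a + η / 2 / (α + η / (2 * a))) * (α + η / (2 * a)) := by gcongr
        have h4 : (a + η / 2 / (α + η / (2 * a))) * (α + η / (2 * a)) = α * a + η := by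
          have : α + η / (2 * a) ≠ 0 := by positivity
          rw [add_mul, div_mul_cancel₀ _ this]
          field_simp
          ring
        linarith)
      have := min_le_right c₁ c₂
      linarith
  -- every admissible `y = s - α ≥ 0` gives an upper bound on `F`
  have hFle : ∀ x y, 0 ≤ x → 0 ≤ y → F x ≤ H y + (α + y) * E ((x - a * y) / (α + y)) := by
    intro x y hx hy
    have h1 := hle (α + y) (α * a + x) (by linarith) (by linarith)
    have hs : 0 < α + y := by linarith
    rw [hF, hH, add_sub_assoc, edge_eq hehom hE hs (by linarith)] at h1
    have h2 : (α * a + x) / (α + y) - a = (x - a * y) / (α + y) := by field_simp; ring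
    rw [h2] at h1
    linarith
  have hF0 : F 0 = 0 := by
    apply le_antisymm
    · have := hFle 0 0 le_rfl le_rfl
      simpa [hHR.zero, hER.zero] using this
    · refine le_of_forall_pos_le_add fun ε hε => ?_
      obtain ⟨s, hs, hlt⟩ := happ (α * a + 0) (by linarith) ε hε
      rw [hF] at hlt
      have h1 := hh s hs
      have h2 := hes s (α * a + 0) hs (by linarith)
      linarith
  have hFpos : ∀ x, 0 < x → 0 < F x := fun x hx => by
    obtain ⟨c, hc, Hc⟩ := hlow x hx
    exact hc.trans_le (Hc x le_rfl)
  have hBR := hER.scale hα hα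
  have hAR := hHR.scale one_pos ha
  have htend : ∀ ε > 0, ∃ δ > 0, ∀ x, 0 < x → x < δ → F x < ε := by
    intro ε hε
    obtain ⟨δ, hδ, hx⟩ := hBR.tend ε hε
    refine ⟨δ, hδ, fun x h0 h1 => ?_⟩
    have := hFle x 0 h0.le le_rfl
    simp only [hHR.zero, mul_zero, sub_zero, add_zero, zero_add] at this
    exact this.trans_lt (hx x h0 h1)
  have hU : ∀ κ > 1, ∃ δ > 0, ∀ x, 0 < x → x < δ → ∀ p q, 0 ≤ p → p < δ → 0 ≤ q → q < δ →
      x ≤ p + q → F x ≤ κ * (1 * H (p / a) + α * E (q / α)) := by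
    intro κ hκ
    -- a square root of `κ`, spent once on `E` and once on the factor `α + y`
    obtain ⟨κ₁, hκ₁, hκκ⟩ : ∃ κ₁ > 1, κ₁ * κ₁ = κ :=
      ⟨√κ, Real.lt_sqrt_of_sq_lt (by simpa using hκ), Real.mul_self_sqrt (by linarith)⟩
    have hκ₁κ : κ₁ ≤ κ := by nlinarith
    obtain ⟨d₁, hd₁, P₁⟩ := hHR.potter 1 one_pos κ (by rwa [Real.one_rpow])
    obtain ⟨d₂, hd₂, P₂⟩ := hER.potter 1 one_pos κ₁ (by rwa [Real.one_rpow])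
    have hκ₁0 : 0 < κ₁ - 1 := by linarith
    refine ⟨min (a * d₁) (min (α * d₂) (a * α * (κ₁ - 1))), by positivity,
      fun x hx hxd p q hp hpd hq hqd hpq => ?_⟩
    simp only [lt_min_iff] at hpd hqd hxd
    have hHp : 0 ≤ H (p / a) := hHR.nonneg (by positivity)
    have hEq : 0 ≤ E (q / α) := hER.nonneg (by positivity)
    rcases le_or_gt x p with hxp | hxp
    · have h1 := hFle x (x / a) hx.le (by positivity)
      rw [mul_div_cancel₀ _ ha.ne', sub_self, zero_div, hER.zero, mul_zero, add_zero] at h1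
      have h2 := P₁ (p / a) (by have := hx.trans_le hxp; positivity)
        (by rw [div_lt_iff₀ ha]; linarith) (x / a) (by positivity) (by rw [one_mul]; gcongr)
      calc F x ≤ κ * H (p / a) := h1.trans h2
        _ ≤ κ * (1 * H (p / a) + α * E (q / α)) := by
          gcongr
          have : 0 ≤ α * E (q / α) := by positivity
          linarith
    · have h1 := hFle x (p / a) hx.le (by positivity)
      rw [mul_div_cancel₀ _ ha.ne'] at h1
      have hq0 : 0 < q := by linarith
      have hxp0 : 0 < x - p := by linarith
      have hpa : 0 ≤ p / a := by positivity
      have hs0 : 0 < α + p / a := by positivity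
      have hs : α + p / a ≤ κ₁ * α := by
        have : p / a ≤ α * (κ₁ - 1) := by
          rw [div_le_iff₀ ha]
          linarith [hpd.2.2]
        linarith
      have h2 := P₂ (q / α) (by positivity) (by rw [div_lt_iff₀ hα]; linarith)
        ((x - p) / (α + p / a)) (by positivity) (by
          rw [one_mul]
          gcongr
          · linarith
          · linarith)
      calc F x ≤ H (p / a) + (α + p / a) * E ((x - p) / (α + p / a)) := h1
        _ ≤ H (p / a) + (κ₁ * α) * (κ₁ * E (q / α)) := by
          gcongr
          exact hER.nonneg (by positivity)
        _ = H (p / a) + κ * (α * E (q / α)) := by rw [← hκκ]; ring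
        _ ≤ κ * H (p / a) + κ * (α * E (q / α)) := by
          gcongr
          exact le_mul_of_one_le_left hHp hκ.le
        _ = κ * (1 * H (p / a) + α * E (q / α)) := by ring
  have hL : ∀ κ > 1, ∀ η > 0, ∃ δ > 0, ∀ x, 0 < x → x < δ → ∃ p q, 0 ≤ p ∧ p < η ∧ 0 ≤ q ∧
      q < η ∧ x ≤ κ * (p + q) ∧ 1 * H (p / a) + α * E (q / α) ≤ κ * F x := by
    intro κ hκ η hη
    obtain ⟨κ₁, hκ₁, hκκ⟩ : ∃ κ₁ > 1, κ₁ * κ₁ = κ :=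
      ⟨√κ, Real.lt_sqrt_of_sq_lt (by simpa using hκ), Real.mul_self_sqrt (by linarith)⟩
    have hκ₁0 : 0 < κ₁ - 1 := by linarith
    have hκ₁κ : κ₁ ≤ κ := by nlinarith
    obtain ⟨r, hr0, hr⟩ := exists_between (show 0 < min (min (α / 2) (α * (κ₁ - 1) / κ₁))
      (min (η / a) (η / (4 * a))) by positivity)
    simp only [lt_min_iff] at hr
    obtain ⟨⟨hr1, hr2⟩, hr3, hr4⟩ := hr
    rw [lt_div_iff₀ (by positivity)] at hr2 hr3 hr4
    obtain ⟨c, hc, Hc⟩ := hloc r hr0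
    obtain ⟨d, hd, Hd⟩ := htend (c / κ₁) (by positivity)
    refine ⟨min d (η / 4), by positivity, fun x hx hxd => ?_⟩
    rw [lt_min_iff] at hxd
    have hFx := hFpos x hx
    have hFc := Hd x hx hxd.1
    rw [lt_div_iff₀ (by positivity)] at hFc
    obtain ⟨s, hs, hlt⟩ := happ (α * a + x) (by linarith) ((κ₁ - 1) * F x) (by positivity)
    rw [hF] at hlt
    have hlt' : h s - 1 + (e s (α * a + x) - s) < κ₁ * F x := by linarith
    obtain ⟨hs1, hs2⟩ := Hc x s hx.le hs (by linarith)
    have hs0 : 0 < s := by linarith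
    rw [edge_eq hehom hE hs0 (by linarith)] at hlt'
    set y := s - α with hy
    set z := (α * a + x) / s - a with hz
    have hyz : a * y + s * z = x := by
      rw [hy, hz]
      field_simp
      ring
    have hHy : h s - 1 = H y := by
      have := hH y
      rw [hy, add_sub_cancel] at this
      linarith
    rw [hHy] at hlt'
    have hHy0 : 0 ≤ H y := by
      rw [← hHy]
      linarith [hh s hs]
    have hEz0 : 0 ≤ s * E z := by
      rw [hz, ← edge_eq hehom hE hs0 (by linarith)]
      exact hes _ _ hs (by linarith)
    have hαs : α ≤ κ₁ * s := by
      have : κ₁ * (α - r) ≤ κ₁ * s := by gcongr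
      nlinarith
    have hsα : s ≤ κ * α := by
      have h1 : α * (κ₁ - 1) / κ₁ ≤ α * (κ₁ - 1) := div_le_self (by positivity) hκ₁.le
      have h2 : r < α * (κ₁ - 1) / κ₁ := by rwa [lt_div_iff₀ (by positivity)]
      nlinarith
    have hκFx : κ₁ * F x ≤ κ * F x := by gcongr
    have hya : a * y < η / 2 := by nlinarith
    have hya' : -(η / 4) < a * y := by nlinarith
    have hqη : α * z < η := by
      rcases le_or_gt z 0 with hz0 | hz0
      · nlinarith
      · have h1 : s * z < η / 2 := by linarith
        have h2 : α / 2 * z ≤ s * z := by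
          apply mul_le_mul_of_nonneg_right _ hz0.le
          linarith
        linarith
    have hαE : 0 ≤ E z → α * E z ≤ κ₁ * (s * E z) := by
      intro h
      calc α * E z ≤ κ₁ * s * E z := by gcongr
        _ = _ := by ring
    have hEz : 0 ≤ E z := nonneg_of_mul_nonneg_right hEz0 hs0
    have hsum : κ₁ * (s * E z + H y) ≤ κ * F x := by
      rw [← hκκ, mul_assoc]
      gcongr
      linarith
    -- the negative one of `y`, `z`, if any, is replaced by `0`
    rcases le_or_gt y 0 with hy0 | hy0
    · have hz0 : 0 < z := by
        by_contra! hcon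
        nlinarith
      refine ⟨0, α * z, le_rfl, hη, by positivity, hqη, ?_, ?_⟩
      · have h1 : s * z ≤ α * z := by
          gcongr
          linarith
        have h2 : a * y ≤ 0 := mul_nonpos_of_nonneg_of_nonpos ha.le hy0
        have h3 : α * z ≤ κ * (α * z) := le_mul_of_one_le_left (by positivity) hκ.le
        rw [zero_add]
        linarith
      · rw [zero_div, hHR.zero, mul_div_cancel_left₀ _ hα.ne', mul_zero, zero_add]
        refine (hαE hEz).trans (le_trans ?_ hsum)
        gcongr
        linarith
    · rcases le_or_gt z 0 with hz0 | hz0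
      · refine ⟨a * y, 0, by positivity, by linarith, le_rfl, hη, ?_, ?_⟩
        · have h2 : s * z ≤ 0 := mul_nonpos_of_nonneg_of_nonpos hs hz0
          have h3 : a * y ≤ κ * (a * y) := le_mul_of_one_le_left (by positivity) hκ.le
          rw [add_zero]
          linarith
        · rw [zero_div, hER.zero, mul_div_cancel_left₀ _ ha.ne']
          linarith
      · refine ⟨a * y, α * z, by positivity, by linarith, by positivity, hqη, ?_, ?_⟩
        · have h1 : s * z ≤ κ * (α * z) := by
            rw [← mul_assoc]
            gcongr
          have h3 : a * y ≤ κ * (a * y) := le_mul_of_one_le_left (by positivity) hκ.le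
          linarith
        · rw [mul_div_cancel_left₀ _ ha.ne', mul_div_cancel_left₀ _ hα.ne']
          have h1 := hαE hEz
          have h2 : H y ≤ κ₁ * H y := le_mul_of_one_le_left hHy0 hκ₁.le
          linarith
  refine ⟨hF0, hlow, htend, fun l hl K hK => ?_⟩
  rcases le_total σ₁ σ₂ with h | h
  · rw [max_eq_right h] at hK
    exact potter_infconv hAR hBR h hU hL l hl K hK
  · rw [max_eq_left h] at hK
    refine potter_infconv hBR hAR h ?_ ?_ l hl K hK
    · intro κ hκ
      obtain ⟨δ, hδ, U⟩ := hU κ hκ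
      refine ⟨δ, hδ, fun x hx hxd p q hp hpd hq hqd hpq => ?_⟩
      rw [add_comm (α * _)]
      exact U x hx hxd q p hq hqd hp hpd (by linarith)
    · intro κ hκ η hη
      obtain ⟨δ, hδ, L⟩ := hL κ hκ η hη
      refine ⟨δ, hδ, fun x hx hxd => ?_⟩
      obtain ⟨p, q, hp, hpη, hq, hqη, h1, h2⟩ := L x hx hxd
      exact ⟨q, p, hq, hqη, hp, hpη, by rwa [add_comm q], by rwa [add_comm (α * _)]⟩

/-! ### Edges, gauges and paths -/

lemma reg_edge {f : ℝ → ℝ} {a β : ℝ}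
    (hgr : IsGreatest {y | y ∈ Set.Icc (0 : ℝ) 1 ∧ f y = 1} a)
    (hmax : ∀ y, 0 ≤ y → max 1 y ≤ f y) (hc : ContinuousOn f (Set.Ici 0))
    (hβ : β ∈ Set.Ico (0 : ℝ) 1) (hrv : RV0 (fun x => f (a + x) - 1) (1 / (1 - β))) :
    Reg (fun x => f (a + x) - 1) (1 / (1 - β)) := by
  obtain ⟨⟨⟨ha0, ha1⟩, hfa⟩, hub⟩ := hgr
  have hpos : ∀ x, 0 < x → 0 < f (a + x) - 1 := by
    intro x hx
    have h1 := hmax (a + x) (by linarith)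
    rcases le_or_gt (a + x) 1 with h | h
    · have h2 : f (a + x) ≠ 1 := fun h2 => by
        have := hub ⟨⟨by linarith, h⟩, h2⟩
        linarith
      have h3 := lt_of_le_of_ne ((le_max_left _ _).trans h1) h2.symm
      linarith
    · have := (le_max_right _ _).trans h1
      linarith
  have hc' : ContinuousOn (fun x => f (a + x) - 1) (Set.Ici 0) := by
    refine ContinuousOn.sub (hc.comp (by fun_prop) fun x hx => ?_) continuousOn_const
    simp only [Set.mem_Ici] at hx ⊢
    linarith
  refine ⟨by simp [hfa], ?_, ?_, ?_⟩
  · intro η hη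
    obtain ⟨x0, hx0, hmin⟩ := isCompact_Icc.exists_isMinOn (Set.nonempty_Icc.2
      (le_max_left η 2)) (hc'.mono fun x hx => hη.le.trans hx.1)
    have hp := hpos x0 (hη.trans_le hx0.1)
    refine ⟨min (f (a + x0) - 1) 1, lt_min hp one_pos, fun x hx => ?_⟩
    rcases le_or_gt x 2 with h | h
    · exact (min_le_left _ _).trans (hmin ⟨hx, h.trans (le_max_right _ _)⟩)
    · have h1 := (le_max_right _ _).trans (hmax (a + x) (by linarith))
      exact (min_le_right _ _).trans (by linarith)
  · intro ε hε
    obtain ⟨δ, hδ, H⟩ := Metric.continuousWithinAt_iff.1 (hc' 0 Set.self_mem_Ici) ε hε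
    refine ⟨δ, hδ, fun x hx hxd => ?_⟩
    have := H (x := x) hx.le (by simpa [abs_of_pos hx] using hxd)
    rw [Real.dist_eq, add_zero, hfa, sub_self, sub_zero] at this
    exact (le_abs_self _).trans_lt this
  · have h1 : 0 < 1 / (1 - β) := by
      have := hβ.2
      exact one_div_pos.2 (by linarith)
    exact potter_of_rv0 h1 (hc'.mono Set.Ioi_subset_Ici_self) hpos hrv

/-- The block-graph gauge dominates every coordinate: adding the clique `C (n + 1)` changes the
partial sum by `gC (n + 1) x - x (D (n + 1)) ≥ 0`, and the old partial sum already dominates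
`x (D (n + 1))`. -/
lemma gauge_ge {V : Type*} [DecidableEq V] {N : ℕ} {C : ℕ → Finset V} {D : ℕ → V}
    (hRIP : ∀ k, 2 ≤ k → k ≤ N → C k ∩ (Finset.Icc 1 (k-1)).biUnion C = {D k})
    {gC : ℕ → (V → ℝ) → ℝ} {x : V → ℝ}
    (hmax : ∀ k, 1 ≤ k → k ≤ N → ∀ w ∈ C k, x w ≤ gC k x) (n : ℕ) (hn : 1 ≤ n) :
    n ≤ N → ∀ w, (∃ k, 1 ≤ k ∧ k ≤ n ∧ w ∈ C k) →
      x w ≤ (∑ k ∈ Finset.Icc 1 n, gC k x) - ∑ k ∈ Finset.Icc 2 n, x (D k) := by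
  induction n, hn using Nat.le_induction with
  | base =>
    rintro hN w ⟨k, hk1, hk2, hw⟩
    obtain rfl : k = 1 := le_antisymm hk2 hk1
    simpa using hmax 1 le_rfl hN w hw
  | succ n hn ih =>
    rintro hN w ⟨k, hk1, hk2, hw⟩
    have hD : D (n + 1) ∈ C (n + 1) ∩ (Finset.Icc 1 (n + 1 - 1)).biUnion C := by
      rw [hRIP (n + 1) (by omega) hN]
      simp
    rw [Finset.mem_inter, Finset.mem_biUnion, Nat.add_sub_cancel] at hD
    obtain ⟨hD1, k', hk', hD2⟩ := hD
    rw [Finset.mem_Icc] at hk'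
    have e1 := ih (by omega) (D (n + 1)) ⟨k', hk'.1, hk'.2, hD2⟩
    have e2 := hmax (n + 1) (by omega) hN (D (n + 1)) hD1
    rw [Finset.sum_Icc_succ_top (by omega), Finset.sum_Icc_succ_top (by omega)]
    rcases hk2.lt_or_eq with h | rfl
    · have := ih (by omega) w ⟨k, hk1, by omega, hw⟩
      linarith
    · have := hmax (n + 1) (by omega) hN w hw
      linarith

lemma exists_walk {V : Type*} {G : SimpleGraph V} {m : ℕ} {v : ℕ → V}
    (hadj : ∀ t < m, G.Adj (v t) (v (t+1))) (t s : ℕ) (h : t + s ≤ m) :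
    ∃ p : G.Walk (v t) (v (t + s)), p.length = s := by
  induction s with
  | zero => exact ⟨.nil, rfl⟩
  | succ s ih =>
    obtain ⟨p, hp⟩ := ih (by omega)
    exact ⟨p.concat (hadj (t + s) (by omega)), by simp [hp]⟩

/-- **Proposition 3** (β-recurrence on a block graph, exponential margins): under the
edge regular-variation assumption (each edge bivariate marginal gauge is positive,
continuous, 1-homogeneous, dominates the max, and `y ↦ g_{v,v'}(1, α_{v'|v}+y) − 1` is
regularly varying at `0⁺` with index `1/(1−β_{v'|v})`) together with the chain identity
for the trivariate marginal gauges along the shortest path, the function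
if every pathwise coefficient `α_{v_k|v_{k−1}}` is strictly positive, then
`x ↦ g_{{i,j}}(1, α_{j|i}+x) − 1` is regularly varying at `0⁺` with index
`1/(1 − max_k β_{v_k|v_{k−1}})`, i.e. `β_{j|i} = max_k β_{v_k|v_{k−1}}`
(first special case after Proposition 3). -/
theorem stmt_5
    {V : Type*} [Fintype V] [DecidableEq V]
    (G : SimpleGraph V)
    (N : ℕ) (hN : 1 ≤ N)
    (C : ℕ → Finset V) (D : ℕ → V)
    (hcover : ∀ w : V, ∃ k, 1 ≤ k ∧ k ≤ N ∧ w ∈ C k)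
    (hCne : ∀ k, 1 ≤ k → k ≤ N → (C k).Nonempty)
    (hRIP : ∀ k, 2 ≤ k → k ≤ N → C k ∩ (Finset.Icc 1 (k-1)).biUnion C = {D k})
    (hG : ∀ a b : V, G.Adj a b ↔ (a ≠ b ∧ ∃ k, 1 ≤ k ∧ k ≤ N ∧ a ∈ C k ∧ b ∈ C k))
    (gC : ℕ → (V → ℝ) → ℝ)
    (hloc : ∀ k, 1 ≤ k → k ≤ N → ∀ x y : V → ℝ, (∀ w ∈ C k, x w = y w) → gC k x = gC k y)
    (hcont : ∀ k, 1 ≤ k → k ≤ N → ContinuousOn (gC k) {x : V → ℝ | ∀ w, 0 ≤ x w})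
    (hhom : ∀ k, 1 ≤ k → k ≤ N → ∀ t : ℝ, 0 ≤ t → ∀ x : V → ℝ, (∀ w, 0 ≤ x w) →
      gC k (t • x) = t * gC k x)
    (hmax : ∀ k, 1 ≤ k → k ≤ N → ∀ x : V → ℝ, (∀ w, 0 ≤ x w) → ∀ w ∈ C k, x w ≤ gC k x)
    (g : (V → ℝ) → ℝ)
    (hg : ∀ x, g x = (∑ k ∈ Finset.Icc 1 N, gC k x) - ∑ k ∈ Finset.Icc 2 N, x (D k))
    -- marginal gauges of pairs and the α-coefficients
    (biv : V → V → ℝ → ℝ → ℝ)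
    (hbiv : ∀ a b : V, ∀ u y : ℝ, biv a b u y =
      sInf {r | ∃ z : V → ℝ, (∀ w, 0 ≤ z w) ∧ z a = u ∧ z b = y ∧ r = g z})
    (alpha : V → V → ℝ)
    (halpha : ∀ a b : V, a ≠ b →
      IsGreatest {y | y ∈ Set.Icc (0:ℝ) 1 ∧ biv a b 1 y = 1} (alpha a b))
    -- edge regular-variation assumption (Assumption 2)
    (betaE : V → V → ℝ)
    (hbetaE : ∀ a b : V, G.Adj a b → betaE a b ∈ Set.Ico (0:ℝ) 1)
    (hedge_max : ∀ a b : V, G.Adj a b → ∀ u y : ℝ, 0 ≤ u → 0 ≤ y → max u y ≤ biv a b u y)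
    (hedge_cont : ∀ a b : V, G.Adj a b →
      ContinuousOn (fun p : ℝ × ℝ => biv a b p.1 p.2) (Set.Ici 0 ×ˢ Set.Ici 0))
    (hedge_hom : ∀ a b : V, G.Adj a b → ∀ t u y : ℝ, 0 ≤ t → 0 ≤ u → 0 ≤ y →
      biv a b (t*u) (t*y) = t * biv a b u y)
    (hedge_RV : ∀ a b : V, G.Adj a b →
      RV0 (fun y => biv a b 1 (alpha a b + y) - 1) (1 / (1 - betaE a b)))
    -- shortest path from i to j
    (i j : V) (hij : i ≠ j)
    (m : ℕ) (hm : 2 ≤ m) (v : ℕ → V)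
    (hv0 : v 0 = i) (hvm : v m = j)
    (hadj : ∀ t < m, G.Adj (v t) (v (t+1)))
    (hshort : G.dist i j = m)
    -- chain identity for the trivariate marginal gauges along the path
    (hchain : ∀ t, 1 ≤ t → t + 1 ≤ m → ∀ u s w : ℝ, 0 ≤ u → 0 ≤ s → 0 ≤ w →
      sInf {r | ∃ z : V → ℝ, (∀ q, 0 ≤ z q) ∧
          z i = u ∧ z (v t) = s ∧ z (v (t+1)) = w ∧ r = g z}
        = biv i (v t) u s + biv (v t) (v (t+1)) s w - s)
    -- all pathwise α-coefficients are strictly positive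
    (hpos : ∀ t < m, 0 < alpha (v t) (v (t+1)))
    -- the maximal pathwise β-coefficient
    (bmax : ℝ)
    (hbmax : IsGreatest {r | ∃ t < m, r = betaE (v t) (v (t+1))} bmax) :
    RV0 (fun x => biv i j 1 (alpha i j + x) - 1) (1 / (1 - bmax)) := by
  have hgmax : ∀ z : V → ℝ, (∀ w, 0 ≤ z w) → ∀ w, z w ≤ g z := by
    intro z hz w
    rw [hg]
    exact gauge_ge hRIP (fun k h1 h2 => hmax k h1 h2 z hz) N hN le_rfl w (hcover w)
  have hbdd : ∀ P : (V → ℝ) → Prop,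
      BddBelow {r | ∃ z : V → ℝ, (∀ w, 0 ≤ z w) ∧ P z ∧ r = g z} := by
    rintro P
    refine ⟨0, ?_⟩
    rintro r ⟨z, hz, -, rfl⟩
    exact (hz i).trans (hgmax z hz i)
  -- a return to `i` would shorten the path
  have hne : ∀ t, 1 ≤ t → t ≤ m → i ≠ v t := by
    intro t h1 h2 hcon
    obtain ⟨p, hp⟩ := exists_walk hadj t (m - t) (by omega)
    have := SimpleGraph.dist_le p
    rw [hp, show t + (m - t) = m by omega, hvm, ← hcon, hshort] at this
    omega
  have hbivle : ∀ b : V, ∀ z : V → ℝ, (∀ w, 0 ≤ z w) → z i = 1 → biv i b 1 (z b) ≤ g z := by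
    intro b z hz hzi
    rw [hbiv]
    refine csInf_le ?_ ⟨z, hz, hzi, rfl, rfl⟩
    simpa only [and_assoc] using hbdd fun q => q i = 1 ∧ q b = z b
  have hnonempty : ∀ b : V, i ≠ b → ∀ y : ℝ, 0 ≤ y →
      {r | ∃ z : V → ℝ, (∀ w, 0 ≤ z w) ∧ z i = 1 ∧ z b = y ∧ r = g z}.Nonempty := by
    intro b hib y hy
    refine ⟨_, fun w => if w = i then 1 else y, fun w => ?_, ?_, ?_, rfl⟩
    · dsimp only
      split_ifs <;> linarith
    · simp
    · simp [hib.symm]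
  have hbiv1 : ∀ b : V, i ≠ b → ∀ y : ℝ, 0 ≤ y → 1 ≤ biv i b 1 y := by
    intro b hib y hy
    rw [hbiv]
    refine le_csInf (hnonempty b hib y hy) ?_
    rintro r ⟨z, hz, hzi, -, rfl⟩
    exact hzi ▸ hgmax z hz i
  have hedge : ∀ t < m, Reg (fun x => biv (v t) (v (t+1)) 1 (alpha (v t) (v (t+1)) + x) - 1)
      (1 / (1 - betaE (v t) (v (t+1)))) := by
    intro t ht
    have had := hadj t ht
    refine reg_edge (halpha _ _ had.ne) (fun y hy => hedge_max _ _ had 1 y zero_le_one hy) ?_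
      (hbetaE _ _ had) (hedge_RV _ _ had)
    exact (hedge_cont _ _ had).comp (f := fun y : ℝ => ((1 : ℝ), y)) (by fun_prop)
      fun y hy => ⟨Set.mem_Ici.2 zero_le_one, hy⟩
  have main : ∀ t, 1 ≤ t → t ≤ m → 0 < alpha i (v t) ∧ ∃ b : ℝ, b < 1 ∧
      IsGreatest {r | ∃ s < t, r = betaE (v s) (v (s+1))} b ∧
      Reg (fun x => biv i (v t) 1 (alpha i (v t) + x) - 1) (1 / (1 - b)) := by
    intro t ht
    induction t, ht using Nat.le_induction with
    | base =>
      intro _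
      have h1 := hpos 0 (by omega)
      have h2 := hedge 0 (by omega)
      have h3 := hbetaE _ _ (hadj 0 (by omega))
      simp only [zero_add, hv0] at h1 h2 h3
      refine ⟨h1, _, h3.2, ⟨⟨0, one_pos, by simp [hv0]⟩, ?_⟩, h2⟩
      rintro r ⟨s, hs, rfl⟩
      obtain rfl : s = 0 := by omega
      simp [hv0]
    | succ t ht ih =>
      intro htm
      obtain ⟨hα, b, hb1, hbg, hR⟩ := ih (by omega)
      have had := hadj t (by omega)
      have ha := hpos t (by omega)
      have hit := hne t ht (by omega)
      have hit' := hne (t + 1) (by omega) htm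
      have hβ := hbetaE _ _ had
      have hER := hedge t (by omega)
      have hch := hchain t ht htm
      set α := alpha i (v t) with hαdef
      set a := alpha (v t) (v (t+1)) with hadef
      have hle : ∀ s w : ℝ, 0 ≤ s → 0 ≤ w → biv i (v (t+1)) 1 w
          ≤ biv i (v t) 1 s + biv (v t) (v (t+1)) s w - s := by
        intro s w hs hw
        rw [← hch 1 s w zero_le_one hs hw]
        refine le_csInf ?_ ?_
        · refine ⟨_, fun q => if q = i then 1 else if q = v t then s else w, fun q => ?_,
            ?_, ?_, ?_, rfl⟩
          · dsimp only
            split_ifs <;> linarith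
          · simp
          · simp [hit.symm]
          · simp [hit'.symm, had.ne']
        · rintro r ⟨z, hz, hzi, -, rfl, rfl⟩
          exact hbivle _ z hz hzi
      have happ : ∀ w : ℝ, 0 ≤ w → ∀ ε > 0, ∃ s, 0 ≤ s ∧
          biv i (v t) 1 s + biv (v t) (v (t+1)) s w - s < biv i (v (t+1)) 1 w + ε := by
        intro w hw ε hε
        obtain ⟨r, ⟨z, hz, hzi, hzw, rfl⟩, hlt⟩ := exists_lt_of_csInf_lt
          (hnonempty _ hit' w hw) (b := biv i (v (t+1)) 1 w + ε) (by rw [← hbiv]; linarith)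
        refine ⟨z (v t), hz _, lt_of_le_of_lt ?_ hlt⟩
        rw [← hch 1 (z (v t)) w zero_le_one (hz _) hw]
        refine csInf_le ?_ ⟨z, hz, hzi, rfl, hzw, rfl⟩
        simpa only [and_assoc] using hbdd fun q => q i = 1 ∧ q (v t) = z (v t) ∧ q (v (t+1)) = w
      have hF := reg_step (k := biv i (v (t+1)) 1)
        (F := fun x => biv i (v (t+1)) 1 (α * a + x) - 1) hα ha
        (fun s hs => hbiv1 _ hit s hs) (hedge_max _ _ had) (hedge_hom _ _ had) hle happ
        (fun y => by ring) (fun y => by ring) (fun y => by ring) hR hER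
      -- `α * a` is a zero of the new excess, and `Reg` leaves no zero beyond it
      have hαeq : alpha i (v (t+1)) = α * a := by
        have hA := (halpha i (v t) hit).1.1
        have hB := (halpha (v t) (v (t+1)) had.ne).1.1
        have hz := hF.zero
        simp only [add_zero, sub_eq_zero] at hz
        refine (halpha i (v (t+1)) hit').unique
          ⟨⟨⟨by positivity, mul_le_one₀ hA.2 hB.1 hB.2⟩, hz⟩, ?_⟩
        rintro y ⟨-, hy⟩
        by_contra! hcon
        have := hF.pos (sub_pos.2 hcon)
        simp only [add_sub_cancel, hy, sub_self, lt_irrefl] at this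
      refine ⟨by rw [hαeq]; positivity, max b (betaE (v t) (v (t+1))), max_lt hb1 hβ.2,
        ⟨?_, ?_⟩, ?_⟩
      · rcases max_choice b (betaE (v t) (v (t+1))) with h | h
        · obtain ⟨s, hs, hbs⟩ := hbg.1
          exact ⟨s, by omega, h.trans hbs⟩
        · exact ⟨t, by omega, h⟩
      · rintro r ⟨s, hs, rfl⟩
        rcases (Nat.lt_succ_iff.1 hs).lt_or_eq with h | rfl
        · exact (hbg.2 ⟨s, h, rfl⟩).trans (le_max_left _ _)
        · exact le_max_right _ _
      · rw [hαeq]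
        convert hF using 1
        -- `β ↦ 1 / (1 - β)` is increasing on `β < 1`
        have h2 := hβ.2
        rcases le_total b (betaE (v t) (v (t+1))) with h | h
        · rw [max_eq_right h, max_eq_right]
          exact one_div_le_one_div_of_le (by linarith) (by linarith)
        · rw [max_eq_left h, max_eq_left]
          exact one_div_le_one_div_of_le (by linarith) (by linarith)
  obtain ⟨-, b, -, hbg, hR⟩ := main m (by omega) le_rfl
  rw [hvm] at hR
  rw [hbmax.unique hbg]
  exact hR.rv0
end

section
/- Consider a block graph with exactly two cliques C_1, C_2 sharing a single separator vertex D, and gauge function g(x) = g_{C_1}(x_{C_1}) + g_{C_2}(x_{C_2}) − |x_D|, where g_{C_1}, g_{C_2} satisfy g_{C_i}(x_{C_i}) ≥ max_{j∈C_i} |x_j|. Let B_1 ⊆ C_1 ∖ {D} and B_2 ⊆ C_2 ∖ {D} be nonempty, set B = B_1 ∪ B_2, and let z^B be any vector with z^B_j = 1 for j ∈ B and |z^B_j| < 1 for j ∉ B. Then g(z^B) > 1. In particular, B is not a geometric extreme direction: variables in two cliques cannot be jointly extreme with the separator variable of smaller order. -/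
/-- **Proposition 7**: for a two-clique block gauge
`g(x) = g_{C₁}(x_{C₁}) + g_{C₂}(x_{C₂}) − |x_D|` with `C₁ ∩ C₂ = {D}`, if nonempty
`B₁ ⊆ C₁ ∖ {D}` and `B₂ ⊆ C₂ ∖ {D}` and `z` equals `1` on `B = B₁ ∪ B₂` and has modulus
`< 1` off `B`, then `g(z) > 1`; i.e., `B` is not a geometric extreme direction. -/
theorem stmt_8
    {V : Type*} [DecidableEq V]
    (C1 C2 : Finset V) (D : V)
    (hsep : C1 ∩ C2 = {D})
    (g1 g2 : (V → ℝ) → ℝ)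
    (h1 : ∀ x : V → ℝ, ∀ j ∈ C1, |x j| ≤ g1 x)
    (h2 : ∀ x : V → ℝ, ∀ j ∈ C2, |x j| ≤ g2 x)
    (g : (V → ℝ) → ℝ)
    (hg : ∀ x, g x = g1 x + g2 x - |x D|)
    (B1 B2 : Finset V)
    (hB1 : B1 ⊆ C1 \ {D}) (hB2 : B2 ⊆ C2 \ {D})
    (hB1ne : B1.Nonempty) (hB2ne : B2.Nonempty)
    (z : V → ℝ)
    (hzB : ∀ j ∈ B1 ∪ B2, z j = 1)
    (hznB : ∀ j ∉ B1 ∪ B2, |z j| < 1) :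
    1 < g z := by
  obtain ⟨a, ha⟩ := hB1ne
  obtain ⟨b, hb⟩ := hB2ne
  have haC := Finset.mem_sdiff.mp (hB1 ha)
  have hbC := Finset.mem_sdiff.mp (hB2 hb)
  -- Each clique gauge is at least `1`, because each clique meets `B`.
  have hg1 : 1 ≤ g1 z := by
    simpa [hzB a (Finset.mem_union_left _ ha)] using h1 z a haC.1
  have hg2 : 1 ≤ g2 z := by
    simpa [hzB b (Finset.mem_union_right _ hb)] using h2 z b hbC.1
  -- The separator lies outside `B`, so less than `1` is subtracted.
  have hD : |z D| < 1 := by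
    refine hznB D fun h => ?_
    rcases Finset.mem_union.mp h with h | h
    · simpa using hB1 h
    · simpa using hB2 h
  rw [hg]
  linarith
end

section
/- Consider a block graph with cliques C_1, …, C_N ordered with the running intersection property and singleton separators D_2, …, D_N, and gauge g(x) = g_{C_1}(x_{C_1}) + Σ_{k=2}^N (g_{C_k}(x_{C_k}) − |x_{D_k}|), where each g_{C_k} satisfies g_{C_k}(x_{C_k}) ≥ max_{j∈C_k} |x_j|. Suppose additionally that D_k ∈ C_{k−1} ∩ C_k for k = 2, …, M (so C_1, …, C_M form a chain of cliques), for some 1 < M ≤ N. Let A ⊂ V contain at least one vertex of C_1 and at least one vertex of C_M, and let z^A be a vector with z^A_j = 1 for j ∈ A and |z^A_j| < 1 for j ∉ A. If g(z^A) = 1, then z^A_{D_k} = 1 for every k = 2, …, M; consequently D_2, …, D_M ∈ A. That is, joint extremes across cliques cannot occur without including the separator variables between those cliques. -/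
/-!
Each summand `gC k z - |z (D k)|` is nonnegative because `D k ∈ C k`, and `gC 1 z ≥ 1` because `A`
meets `C 1`. So `g z = 1` forces every summand to vanish: `gC k z = |z (D k)|` for `2 ≤ k ≤ N`.
Now walk down the chain from `C M`, where `gC M z ≥ 1` because `A` meets `C M`. If `gC k z ≥ 1`,
then `|z (D k)| ≥ 1`, and `D k ∈ C (k - 1)` gives `gC (k - 1) z ≥ 1`. Hence `|z (D k)| ≥ 1` for all
`2 ≤ k ≤ M`, which is possible only on `A`, where `z = 1`.
-/

/-- **Proposition 8**: for a block gauge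
`g(x) = g_{C₁}(x_{C₁}) + Σ_{k=2}^N (g_{C_k}(x_{C_k}) − |x_{D_k}|)` whose first `M` cliques
form a chain (`D_k ∈ C_{k−1} ∩ C_k` for `k = 2, …, M`), if `A` meets both `C₁` and `C_M`
and `z` equals `1` on `A` and has modulus `< 1` off `A`, then `g(z) = 1` forces
`z_{D_k} = 1` (hence `D_k ∈ A`) for every `k = 2, …, M`: joint extremes across cliques
cannot occur without including the separator variables between those cliques. -/
theorem stmt_9
    {V : Type*} [DecidableEq V]
    (N : ℕ) (C : ℕ → Finset V) (D : ℕ → V)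
    (hsep : ∀ k, 2 ≤ k → k ≤ N → D k ∈ C k)
    (M : ℕ) (hM2 : 2 ≤ M) (hMN : M ≤ N)
    (hchain : ∀ k, 2 ≤ k → k ≤ M → D k ∈ C (k-1) ∧ D k ∈ C k)
    (gC : ℕ → (V → ℝ) → ℝ)
    (hmax : ∀ k, 1 ≤ k → k ≤ N → ∀ x : V → ℝ, ∀ j ∈ C k, |x j| ≤ gC k x)
    (g : (V → ℝ) → ℝ)
    (hg : ∀ x, g x = gC 1 x + ∑ k ∈ Finset.Icc 2 N, (gC k x - |x (D k)|))
    (A : Set V)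
    (a1 : V) (ha1A : a1 ∈ A) (ha1C : a1 ∈ C 1)
    (a2 : V) (ha2A : a2 ∈ A) (ha2C : a2 ∈ C M)
    (z : V → ℝ)
    (hzA : ∀ j ∈ A, z j = 1)
    (hznA : ∀ j ∉ A, |z j| < 1)
    (hgz : g z = 1) :
    ∀ k, 2 ≤ k → k ≤ M → z (D k) = 1 ∧ D k ∈ A := by
  have h_nonneg : ∀ k ∈ Finset.Icc 2 N, 0 ≤ gC k z - |z (D k)| := by
    intro k hk
    obtain ⟨h2, hN⟩ := Finset.mem_Icc.mp hk
    exact sub_nonneg.mpr (hmax k (by omega) hN z _ (hsep k h2 hN))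
  have h_first : 1 ≤ gC 1 z := by
    simpa [hzA a1 ha1A] using hmax 1 le_rfl (by omega) z a1 ha1C
  have h_sum : ∑ k ∈ Finset.Icc 2 N, (gC k z - |z (D k)|) = 0 :=
    le_antisymm (by linarith [hg z]) (Finset.sum_nonneg h_nonneg)
  have h_eq : ∀ k, 2 ≤ k → k ≤ N → gC k z = |z (D k)| := fun k h2 hN =>
    sub_eq_zero.mp
      ((Finset.sum_eq_zero_iff_of_nonneg h_nonneg).mp h_sum k (Finset.mem_Icc.mpr ⟨h2, hN⟩))
  have h_last : 1 ≤ gC M z := by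
    simpa [hzA a2 ha2A] using hmax M (by omega) hMN z a2 ha2C
  have h_chain : ∀ k, k ≤ M → 2 ≤ k → 1 ≤ gC k z := by
    intro k hkM
    induction hkM using Nat.decreasingInduction with
    | self => exact fun _ => h_last
    | of_succ k hk ih =>
      intro h2
      have hD : D (k + 1) ∈ C k := (hchain (k + 1) (by omega) hk).1
      calc 1 ≤ gC (k + 1) z := ih (by omega)
        _ = |z (D (k + 1))| := h_eq _ (by omega) (by omega)
        _ ≤ gC k z := hmax k (by omega) (by omega) z _ hD
  intro k h2 hkM
  have h_one : 1 ≤ |z (D k)| := h_eq k h2 (hkM.trans hMN) ▸ h_chain k hkM h2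
  have h_mem : D k ∈ A := by
    by_contra h
    exact (hznA _ h).not_ge h_one
  exact ⟨hzA _ h_mem, h_mem⟩
end

section
/- Let θ_{12}, γ_{12}, θ_{23}, γ_{23} ∈ (0,1) and define, for u, v ≥ 0, g_{12}(u, v) = u/θ_{12} + v/γ_{12} + (1 − 1/θ_{12} − 1/γ_{12})·min(u, v) and g_{23}(u, v) = u/θ_{23} + v/γ_{23} + (1 − 1/θ_{23} − 1/γ_{23})·min(u, v). Then for all x_1, x_3 ≥ 0, the minimum over x_2 ≥ 0 of g_{12}(x_1, x_2) + g_{23}(x_2, x_3) − x_2 equals x_1/max(θ_{12}, θ_{23}) + x_3/max(γ_{12}, γ_{23}) + (1 − 1/max(θ_{12}, θ_{23}) − 1/max(γ_{12}, γ_{23}))·min(x_1, x_3). -/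
/-! With `a = 1/θ`, `b = 1/γ`, the gauge is `a (u - v) + v` for `v ≤ u` and `b (v - u) + u` for
`u ≤ v`, so the objective is piecewise linear in `x₂` with breakpoints `x₁`, `x₃`. Since all of
the reciprocals exceed `1`, it decreases before the smaller breakpoint and increases after the
larger one, so the minimum is attained at a breakpoint. For `x₃ ≤ x₁` the slope in between is
`1/θ₂₃ - 1/θ₁₂`: the minimum value is `A (x₁ - x₃) + x₃` with `A` the smaller of `1/θ₁₂`, `1/θ₂₃`,
that is `A = 1 / max θ₁₂ θ₂₃`. The case `x₁ ≤ x₃` is the mirror image, with the `γ`s. -/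

/-- The chain objective in terms of the reciprocal parameters `a = 1/θ₁₂`, `b = 1/γ₁₂`,
`c = 1/θ₂₃`, `d = 1/γ₂₃`. -/
def chainObj (a b c d x y z : ℝ) : ℝ :=
  (a * x + b * y + (1 - a - b) * min x y) + (c * y + d * z + (1 - c - d) * min y z) - y

/-- Exchanging the two end nodes of the chain reduces the case `x ≤ z` to `z ≤ x`. -/
lemma chainObj_swap (a b c d x y z : ℝ) :
    chainObj a b c d x y z = chainObj d c b a z y x := by
  simp only [chainObj, min_comm x y, min_comm y z]
  ring

lemma chainObj_lower {a b c d x y z : ℝ} (ha : 1 < a) (hb : 1 < b) (hc : 1 < c) (hd : 1 < d)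
    (hzx : z ≤ x) : min a c * (x - z) + z ≤ chainObj a b c d x y z := by
  have hA := mul_le_mul_of_nonneg_right (min_le_left a c) (sub_nonneg.2 hzx)
  have hC := mul_le_mul_of_nonneg_right (min_le_right a c) (sub_nonneg.2 hzx)
  unfold chainObj
  rcases le_total y z with h | h
  · rw [min_eq_right (h.trans hzx), min_eq_left h]
    nlinarith
  · rw [min_eq_right h]
    rcases le_total x y with h' | h'
    · rw [min_eq_left h']
      nlinarith
    · rw [min_eq_right h']
      have h1 := mul_le_mul_of_nonneg_right (min_le_left a c) (sub_nonneg.2 h')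
      have h2 := mul_le_mul_of_nonneg_right (min_le_right a c) (sub_nonneg.2 h)
      linarith

lemma chainObj_isLeast {a b c d x z : ℝ} (ha : 1 < a) (hb : 1 < b) (hc : 1 < c) (hd : 1 < d)
    (hx : 0 ≤ x) (hz : 0 ≤ z) (hzx : z ≤ x) :
    IsLeast {r : ℝ | ∃ y : ℝ, 0 ≤ y ∧ r = chainObj a b c d x y z}
      (min a c * (x - z) + z) := by
  constructor
  · rcases le_total a c with h | h
    · refine ⟨z, hz, ?_⟩
      rw [min_eq_left h, chainObj, min_eq_right hzx, min_self]
      ring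
    · refine ⟨x, hx, ?_⟩
      rw [min_eq_right h, chainObj, min_eq_right hzx, min_self]
      ring
  · rintro r ⟨y, -, rfl⟩
    exact chainObj_lower ha hb hc hd hzx

lemma one_div_max_eq {s t : ℝ} (hs : 0 < s) (ht : 0 < t) :
    1 / max s t = min (1 / s) (1 / t) := by
  rcases le_total s t with h | h
  · rw [max_eq_right h, min_eq_right (one_div_le_one_div_of_le hs h)]
  · rw [max_eq_left h, min_eq_left (one_div_le_one_div_of_le ht h)]

/-- **Lemma 1**: for the parametric family of bivariate gauges
`g(u,v) = u/θ + v/γ + (1 − 1/θ − 1/γ)·min(u,v)`, `θ, γ ∈ (0,1)`, the marginalization of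
the three-node chain gauge `g₁₂(x₁,x₂) + g₂₃(x₂,x₃) − x₂` over `x₂ ≥ 0` equals the gauge
of the same family with parameters `max(θ₁₂,θ₂₃)` and `max(γ₁₂,γ₂₃)`. -/
theorem stmt_10
    (θ12 γ12 θ23 γ23 : ℝ)
    (hθ12 : θ12 ∈ Set.Ioo (0:ℝ) 1) (hγ12 : γ12 ∈ Set.Ioo (0:ℝ) 1)
    (hθ23 : θ23 ∈ Set.Ioo (0:ℝ) 1) (hγ23 : γ23 ∈ Set.Ioo (0:ℝ) 1)
    (g12 g23 : ℝ → ℝ → ℝ)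
    (hg12 : ∀ u v : ℝ, g12 u v = u/θ12 + v/γ12 + (1 - 1/θ12 - 1/γ12) * min u v)
    (hg23 : ∀ u v : ℝ, g23 u v = u/θ23 + v/γ23 + (1 - 1/θ23 - 1/γ23) * min u v)
    (x1 x3 : ℝ) (hx1 : 0 ≤ x1) (hx3 : 0 ≤ x3) :
    sInf {r : ℝ | ∃ x2 : ℝ, 0 ≤ x2 ∧ r = g12 x1 x2 + g23 x2 x3 - x2}
      = x1 / max θ12 θ23 + x3 / max γ12 γ23
        + (1 - 1 / max θ12 θ23 - 1 / max γ12 γ23) * min x1 x3 := by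
  have ha := one_lt_one_div hθ12.1 hθ12.2
  have hb := one_lt_one_div hγ12.1 hγ12.2
  have hc := one_lt_one_div hθ23.1 hθ23.2
  have hd := one_lt_one_div hγ23.1 hγ23.2
  have hobj : ∀ y, g12 x1 y + g23 y x3 - y
      = chainObj (1/θ12) (1/γ12) (1/θ23) (1/γ23) x1 y x3 := by
    intro y
    rw [hg12, hg23, chainObj]
    ring
  rw [div_eq_mul_one_div x1, div_eq_mul_one_div x3, one_div_max_eq hθ12.1 hθ23.1,
    one_div_max_eq hγ12.1 hγ23.1]
  simp only [hobj]
  rcases le_total x3 x1 with h | h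
  · rw [(chainObj_isLeast ha hb hc hd hx1 hx3 h).csInf_eq, min_eq_right h]
    ring
  · simp only [chainObj_swap _ _ _ _ x1]
    rw [(chainObj_isLeast hd hc hb ha hx3 hx1 h).csInf_eq, min_eq_left h,
      min_comm (1/γ23)]
    ring
end

section
/- Let T = (V, E) be a tree and let k, l ∈ V be distinct with path k = v_0, v_1, …, v_m = l in T. Suppose the gauge of the tree geometric extremal graphical model is g(x) = Σ_{(i,j)∈E} (g_{ij}(x_i, x_j) − x_i − x_j) + Σ_{v∈V} x_v on [0,∞)^V, where every edge gauge has the form g_{ij}(u, v) = u/θ_{ij} + v/γ_{ij} + (1 − 1/θ_{ij} − 1/γ_{ij})·min(u, v) with θ_{ij}, γ_{ij} ∈ (0,1), oriented so that along the path from k to l the edge between v_{t−1} and v_t has first argument x_{v_{t−1}} with parameter θ_t := θ_{v_{t−1}v_t} and second argument x_{v_t} with parameter γ_t := γ_{v_{t−1}v_t}. Assume each edge gauge not on the path likewise belongs to this family. Then the bivariate marginal gauge g_{{k,l}}(x_k, x_l) = inf{ g(x) : x_v ≥ 0, v ∉ {k,l} } equals x_k/max_{t=1,…,m} θ_t + x_l/max_{t=1,…,m}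 γ_t + (1 − 1/max_t θ_t − 1/max_t γ_t)·min(x_k, x_l). -/
/-!
Root the tree at `k`. Each edge has a far end, the endpoint further from `k`, and "far end" is a
bijection from the edges onto the vertices other than `k` (`farEnd_bij`). Hence
`g x = x k + ∑ₑ (gₑ x - x (near end of e))`.

An edge gauge minus either of its arguments is nonnegative and vanishes when the two arguments
agree; minus its first argument it is at least the asymmetric distance
`asymDist (1/Θ - 1) (1/Γ)` (`edge_ge`), which satisfies the triangle inequality. Dropping the
edges off the path and telescoping along the path gives the lower bound.

The bound is attained by a vector jumping from `x k` to `x l` across a single path edge `e`, one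
where `θ` is maximal if `x l ≤ x k` and one where `γ` is maximal otherwise. Deleting `e`
disconnects the tree, and the vector is constant on each of the two pieces, so `e` is the only
edge that contributes.
-/

/-- The endpoint of the edge `p` further from the root `k`. The convention for equal distances is
immaterial, as this never happens in a tree. -/
noncomputable def farEnd {V : Type*} (G : SimpleGraph V) (k : V) (p : V × V) : V :=
  if G.dist p.1 k < G.dist p.2 k then p.2 else p.1

/-- The asymmetric distance on `ℝ` charging `α` per unit of descent and `β` per unit of ascent. -/
noncomputable def asymDist (α β u v : ℝ) : ℝ := α * max (u - v) 0 + β * max (v - u) 0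

lemma asymDist_triangle {α β : ℝ} (hα : 0 ≤ α) (hβ : 0 ≤ β) (u v w : ℝ) :
    asymDist α β u w ≤ asymDist α β u v + asymDist α β v w := by
  have h1 : max (u - w) 0 ≤ max (u - v) 0 + max (v - w) 0 := by
    refine max_le ?_ (by positivity)
    linarith [le_max_left (u - v) 0, le_max_left (v - w) 0]
  have h2 : max (w - u) 0 ≤ max (v - u) 0 + max (w - v) 0 := by
    refine max_le ?_ (by positivity)
    linarith [le_max_left (v - u) 0, le_max_left (w - v) 0]
  unfold asymDist
  nlinarith [mul_le_mul_of_nonneg_left h1 hα, mul_le_mul_of_nonneg_left h2 hβ]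

lemma edge_sub_eq (θ γ u v : ℝ) :
    u / θ + v / γ + (1 - 1 / θ - 1 / γ) * min u v - u = asymDist (1 / θ - 1) (1 / γ) u v := by
  unfold asymDist
  rcases le_total u v with h | h
  · rw [min_eq_left h, max_eq_right (by linarith), max_eq_left (by linarith)]
    ring
  · rw [min_eq_right h, max_eq_left (by linarith), max_eq_right (by linarith)]
    ring

lemma edge_ge {θ γ Θ Γ : ℝ} (hθ : 0 < θ) (hγ : 0 < γ) (hΘ : θ ≤ Θ) (hΓ : γ ≤ Γ) (u v : ℝ) :
    asymDist (1 / Θ - 1) (1 / Γ) u v ≤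
      u / θ + v / γ + (1 - 1 / θ - 1 / γ) * min u v - u := by
  rw [edge_sub_eq]
  have h1 : 1 / Θ ≤ 1 / θ := one_div_le_one_div_of_le hθ hΘ
  have h2 : 1 / Γ ≤ 1 / γ := one_div_le_one_div_of_le hγ hΓ
  unfold asymDist
  gcongr

lemma edge_nonneg {θ γ : ℝ} (hθ : θ ∈ Set.Ioo (0:ℝ) 1) (hγ : γ ∈ Set.Ioo (0:ℝ) 1) (u v : ℝ) :
    0 ≤ u / θ + v / γ + (1 - 1 / θ - 1 / γ) * min u v - u ∧
      0 ≤ u / θ + v / γ + (1 - 1 / θ - 1 / γ) * min u v - v := by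
  have h1 : 1 ≤ 1 / θ := one_le_one_div hθ.1 hθ.2.le
  have h2 : 1 ≤ 1 / γ := one_le_one_div hγ.1 hγ.2.le
  have e : ∀ a b : ℝ, a / b = (1 / b) * a := fun a b => by ring
  rw [e u, e v]
  rcases le_total u v with h | h
  · rw [min_eq_left h]
    constructor <;> nlinarith
  · rw [min_eq_right h]
    constructor <;> nlinarith

section Tree

variable {V : Type*} {G : SimpleGraph V} {ε : Finset (V × V)}

/-- In a tree, the far ends of the edges run once through the vertices other than the root: every
such vertex has a neighbour closer to the root, and there are `|V| - 1` edges. -/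
lemma farEnd_bij [Fintype V] [DecidableEq V] (hT : G.IsTree)
    (hεG : ∀ a b : V, G.Adj a b ↔ ((a, b) ∈ ε ∨ (b, a) ∈ ε))
    (hεone : ∀ a b : V, ¬((a, b) ∈ ε ∧ (b, a) ∈ ε)) (k : V) :
    Set.BijOn (farEnd G k) ε (Finset.univ.erase k : Finset V) := by
  classical
  have hconn := hT.connected
  have hmaps : Set.MapsTo (farEnd G k) ε (Finset.univ.erase k : Finset V) := by
    rintro ⟨a, b⟩ hp
    have hadj : G.Adj a b := (hεG a b).2 (Or.inl hp)
    simp only [Finset.coe_erase, Finset.coe_univ, Set.mem_sdiff, Set.mem_univ, true_and,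
      Set.mem_singleton_iff, farEnd]
    split_ifs with h
    · rintro rfl
      simp at h
    · rintro rfl
      simp only [SimpleGraph.dist_self, not_lt, Nat.le_zero] at h
      exact hadj.ne (hconn.dist_eq_zero_iff.1 h).symm
  have hsurj : Set.SurjOn (farEnd G k) ε (Finset.univ.erase k : Finset V) := by
    intro w hw
    have hwk : w ≠ k := by simpa using hw
    obtain ⟨q, hq⟩ := hconn.exists_walk_length_eq_dist w k
    cases q with
    | nil => exact absurd rfl hwk
    | @cons _ w' _ h q =>
      have h1 := SimpleGraph.dist_le q
      rw [SimpleGraph.Walk.length_cons] at hq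
      rcases (hεG w w').1 h with h2 | h2
      · refine ⟨(w, w'), h2, ?_⟩
        simp only [farEnd]
        rw [if_neg (by omega)]
      · refine ⟨(w', w), h2, ?_⟩
        simp only [farEnd]
        rw [if_pos (by omega)]
  have hcard : ε.card ≤ (Finset.univ.erase k : Finset V).card := by
    have h1 : ε.card ≤ G.edgeFinset.card := by
      refine Finset.card_le_card_of_injOn (fun p => s(p.1, p.2)) ?_ ?_
      · rintro ⟨a, b⟩ hp
        simpa using (hεG a b).2 (Or.inl hp)
      · rintro ⟨a, b⟩ hp ⟨c, d⟩ hq h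
        rcases Sym2.eq_iff.1 h with ⟨rfl, rfl⟩ | ⟨rfl, rfl⟩
        · rfl
        · exact absurd ⟨hp, hq⟩ (hεone _ _)
    have h2 := hT.card_edgeFinset
    rw [Finset.card_erase_of_mem (Finset.mem_univ k), Finset.card_univ]
    omega
  exact ⟨hmaps, Finset.injOn_of_surjOn_of_card_le _ hmaps hsurj hcard, hsurj⟩

lemma sum_farEnd [Fintype V] [DecidableEq V] {k : V}
    (hb : Set.BijOn (farEnd G k) ε (Finset.univ.erase k : Finset V))
    (x : V → ℝ) : ∑ w, x w = x k + ∑ p ∈ ε, x (farEnd G k p) := by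
  rw [← Finset.add_sum_erase _ x (Finset.mem_univ k)]
  congr 1
  exact (Finset.sum_nbij (farEnd G k) hb.mapsTo hb.injOn hb.surjOn fun _ _ => rfl).symm

/-- A path issuing from the root moves away from it at every step: at the first step back towards
the root, two distinct edges would share their far end. -/
lemma farEnd_path [Fintype V] [DecidableEq V] {k : V}
    (hb : Set.BijOn (farEnd G k) ε (Finset.univ.erase k : Finset V))
    (hconn : G.Connected) {m : ℕ} {v : ℕ → V} (hv0 : v 0 = k)
    (hpath : ∀ t < m, (v t, v (t+1)) ∈ ε)
    (hinj : ∀ s ≤ m, ∀ t ≤ m, v s = v t → s = t) :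
    ∀ t < m, farEnd G k (v t, v (t+1)) = v (t+1) := by
  intro t
  induction t with
  | zero =>
    intro h
    have hne : v (0+1) ≠ k := fun h' => by
      have := hinj (0+1) h 0 (by omega) (h'.trans hv0.symm)
      omega
    simp only [farEnd]
    rw [hv0, SimpleGraph.dist_self, if_pos (hconn.pos_dist_of_ne hne)]
  | succ t ih =>
    intro h
    by_contra hc
    have h1 : farEnd G k (v (t+1), v (t+1+1)) = v (t+1) := by
      unfold farEnd at hc ⊢
      split_ifs at hc ⊢ with h'
      · exact absurd rfl hc
      · rfl
    have h2 := hb.injOn (hpath _ h) (hpath t (by omega)) (h1.trans (ih (by omega)).symm)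
    have := hinj _ (by omega) _ (by omega) (Prod.ext_iff.1 h2).1
    omega

/-- Deleting the path edge between `v t` and `v (t+1)` leaves `v t` on the side of `v 0`, and
`v (t+1), …, v m` on the other. -/
lemma reachable_delete (hT : G.IsTree) (hεG : ∀ a b : V, G.Adj a b ↔ ((a, b) ∈ ε ∨ (b, a) ∈ ε))
    {m : ℕ} {v : ℕ → V} (hpath : ∀ t < m, (v t, v (t+1)) ∈ ε)
    (hinj : ∀ s ≤ m, ∀ t ≤ m, v s = v t → s = t) {t : ℕ} (ht : t < m) :
    (G.deleteEdges {s(v t, v (t+1))}).Reachable (v 0) (v t) ∧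
    (∀ n, t + 1 ≤ n → n ≤ m →
      ¬ (G.deleteEdges {s(v t, v (t+1))}).Reachable (v 0) (v n)) := by
  have hadj : ∀ s < m, s ≠ t → (G.deleteEdges {s(v t, v (t+1))}).Adj (v s) (v (s+1)) := by
    intro s hs hst
    rw [SimpleGraph.deleteEdges_adj]
    refine ⟨(hεG _ _).2 (Or.inl (hpath s hs)), fun h => ?_⟩
    rcases Sym2.eq_iff.1 h with ⟨h1, -⟩ | ⟨h1, h2⟩
    · exact hst (hinj _ (by omega) _ (by omega) h1)
    · have := hinj _ (by omega) _ (by omega) h1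
      have := hinj _ (by omega) _ (by omega) h2
      omega
  have h0 : ∀ n ≤ t, (G.deleteEdges {s(v t, v (t+1))}).Reachable (v 0) (v n) := by
    intro n
    induction n with
    | zero => exact fun _ => .refl _
    | succ n ih => exact fun h => (ih (by omega)).trans (hadj n (by omega) (by omega)).reachable
  have h1 : ∀ n, t + 1 ≤ n → n ≤ m →
      (G.deleteEdges {s(v t, v (t+1))}).Reachable (v (t+1)) (v n) := by
    intro n hn
    induction n, hn using Nat.le_induction with
    | base => exact fun _ => .refl _
    | succ n hn ih =>
      exact fun h => (ih (by omega)).trans (hadj n (by omega) (by omega)).reachable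
  have hbr : ¬ (G.deleteEdges {s(v t, v (t+1))}).Reachable (v t) (v (t+1)) :=
    SimpleGraph.isAcyclic_iff_forall_adj_isBridge.1 hT.isAcyclic
      ((hεG _ _).2 (Or.inl (hpath t ht)))
  exact ⟨h0 t le_rfl, fun n hn hnm h =>
    hbr (((h0 t le_rfl).symm.trans h).trans (h1 n hn hnm).symm)⟩

end Tree


/-- **Proposition 9**: for a tree geometric extremal graphical model whose edge gauges all
belong to the parametric family `g(u,v) = u/θ + v/γ + (1 − 1/θ − 1/γ)·min(u,v)`,
`θ, γ ∈ (0,1)`, the bivariate marginal gauge of two vertices `k, l` equals the member of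
the same family with parameters `max_t θ_t` and `max_t γ_t`, the maxima being taken over
the edges of the (unique, suitably oriented) path from `k` to `l`.  The edge set `ε`
records one orientation of each tree edge, and the path edges are oriented forwards. -/
theorem stmt_11
    {V : Type*} [Fintype V] [DecidableEq V]
    (G : SimpleGraph V) (hT : G.IsTree)
    (ε : Finset (V × V))
    (hεG : ∀ a b : V, G.Adj a b ↔ ((a, b) ∈ ε ∨ (b, a) ∈ ε))
    (hεirr : ∀ p ∈ ε, (p : V × V).1 ≠ p.2)
    (hεone : ∀ a b : V, ¬((a, b) ∈ ε ∧ (b, a) ∈ ε))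
    (θ γ : V × V → ℝ)
    (hθ : ∀ p ∈ ε, θ p ∈ Set.Ioo (0:ℝ) 1)
    (hγ : ∀ p ∈ ε, γ p ∈ Set.Ioo (0:ℝ) 1)
    (gE : V × V → ℝ → ℝ → ℝ)
    (hgE : ∀ p ∈ ε, ∀ u v : ℝ,
      gE p u v = u / θ p + v / γ p + (1 - 1/θ p - 1/γ p) * min u v)
    (g : (V → ℝ) → ℝ)
    (hg : ∀ x, g x =
      (∑ p ∈ ε, (gE p (x p.1) (x p.2) - x p.1 - x p.2)) + ∑ w : V, x w)
    (k l : V) (hkl : k ≠ l)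
    (m : ℕ) (hm : 1 ≤ m) (v : ℕ → V)
    (hv0 : v 0 = k) (hvm : v m = l)
    (hpath : ∀ t < m, (v t, v (t+1)) ∈ ε)
    (hinj : ∀ s ≤ m, ∀ t ≤ m, v s = v t → s = t)
    (Θ Γ : ℝ)
    (hΘ : IsGreatest {r | ∃ t < m, r = θ (v t, v (t+1))} Θ)
    (hΓ : IsGreatest {r | ∃ t < m, r = γ (v t, v (t+1))} Γ)
    (xk xl : ℝ) (hxk : 0 ≤ xk) (hxl : 0 ≤ xl) :
    sInf {r : ℝ | ∃ y : V → ℝ, (∀ w, 0 ≤ y w) ∧ y k = xk ∧ y l = xl ∧ r = g y}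
      = xk / Θ + xl / Γ + (1 - 1/Θ - 1/Γ) * min xk xl := by
  classical
  have hb := farEnd_bij hT hεG hεone k
  have hfar := farEnd_path hb hT.connected hv0 hpath hinj
  have hgk : ∀ y, g y = y k +
      ∑ p ∈ ε, (gE p (y p.1) (y p.2) - y p.1 - y p.2 + y (farEnd G k p)) := by
    intro y
    rw [hg, sum_farEnd hb, Finset.sum_add_distrib]
    ring
  have hpt : ∀ t < m, ∀ y : V → ℝ, gE (v t, v (t+1)) (y (v t)) (y (v (t+1))) - y (v t)
      - y (v (t+1)) + y (farEnd G k (v t, v (t+1))) =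
      gE (v t, v (t+1)) (y (v t)) (y (v (t+1))) - y (v t) := by
    intro t ht y
    rw [hfar t ht]
    ring
  obtain ⟨⟨tΘ, htΘ, hΘeq⟩, hΘub⟩ := hΘ
  obtain ⟨⟨tΓ, htΓ, hΓeq⟩, hΓub⟩ := hΓ
  have hΘ1 : Θ ∈ Set.Ioo (0:ℝ) 1 := hΘeq ▸ hθ _ (hpath _ htΘ)
  have hΓ1 : Γ ∈ Set.Ioo (0:ℝ) 1 := hΓeq ▸ hγ _ (hpath _ htΓ)
  have hα : 0 ≤ 1 / Θ - 1 := by linarith [one_le_one_div hΘ1.1 hΘ1.2.le]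
  have hβ : 0 ≤ 1 / Γ := (one_div_pos.2 hΓ1.1).le
  have htarget : xk / Θ + xl / Γ + (1 - 1/Θ - 1/Γ) * min xk xl =
      xk + asymDist (1 / Θ - 1) (1 / Γ) xk xl := by
    rw [← edge_sub_eq]
    ring
  rw [htarget]
  refine IsLeast.csInf_eq ⟨?_, ?_⟩
  · -- Only the parameter governing the direction of the jump matters.
    obtain ⟨t, ht, hjump⟩ : ∃ t < m, gE (v t, v (t+1)) xk xl - xk =
        asymDist (1 / Θ - 1) (1 / Γ) xk xl := by
      rcases le_total xk xl with h | h
      · refine ⟨tΓ, htΓ, ?_⟩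
        rw [hgE _ (hpath _ htΓ), edge_sub_eq, ← hΓeq]
        simp [asymDist, max_eq_right (sub_nonpos.2 h)]
      · refine ⟨tΘ, htΘ, ?_⟩
        rw [hgE _ (hpath _ htΘ), edge_sub_eq, ← hΘeq]
        simp [asymDist, max_eq_right (sub_nonpos.2 h)]
    obtain ⟨hr, hnr⟩ := reachable_delete hT hεG hpath hinj ht
    set H := G.deleteEdges {s(v t, v (t+1))} with hH
    let y : V → ℝ := fun w => if H.Reachable (v 0) w then xk else xl
    have hyk : y k = xk := by
      rw [← hv0]
      exact if_pos (.refl _)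
    have hyl : y l = xl := by
      rw [← hvm]
      exact if_neg (hnr m ht le_rfl)
    have hyt : y (v t) = xk := if_pos hr
    have hyt' : y (v (t+1)) = xl := if_neg (hnr (t+1) le_rfl ht)
    refine ⟨y, fun w => ?_, hyk, hyl, ?_⟩
    · show 0 ≤ if H.Reachable (v 0) w then xk else xl
      split_ifs <;> assumption
    · rw [hgk, hyk, Finset.sum_eq_single (v t, v (t+1)), hpt t ht, hyt, hyt', hjump]
      · rintro ⟨a, b⟩ hp hne
        have hab : H.Adj a b := by
          rw [hH, SimpleGraph.deleteEdges_adj]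
          refine ⟨(hεG _ _).2 (Or.inl hp), fun h => ?_⟩
          rcases Sym2.eq_iff.1 h with ⟨h1, h2⟩ | ⟨h1, h2⟩
          · exact hne (by rw [h1, h2])
          · exact hεone a b ⟨hp, by rw [h1, h2]; exact hpath t ht⟩
        have hyab : y a = y b := by
          have : H.Reachable (v 0) a ↔ H.Reachable (v 0) b :=
            ⟨fun h => h.trans hab.reachable, fun h => h.trans hab.symm.reachable⟩
          simp only [y, this]
        have hf : y (farEnd G k (a, b)) = y b := by
          unfold farEnd
          split_ifs
          · rfl
          · exact hyab
        rw [hf, hgE _ hp, hyab, min_self]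
        ring
      · exact fun h => absurd (hpath t ht) h
  · rintro r ⟨y, -, hyk, hyl, rfl⟩
    rw [hgk, hyk]
    have hnonneg : ∀ p ∈ ε,
        0 ≤ gE p (y p.1) (y p.2) - y p.1 - y p.2 + y (farEnd G k p) := by
      intro p hp
      have := edge_nonneg (hθ p hp) (hγ p hp) (y p.1) (y p.2)
      rw [hgE p hp]
      unfold farEnd
      split_ifs <;> linarith
    have htel : ∀ n ≤ m, asymDist (1 / Θ - 1) (1 / Γ) (y (v 0)) (y (v n)) ≤
        ∑ t ∈ Finset.range n, (gE (v t, v (t+1)) (y (v t)) (y (v (t+1))) - y (v t)) := by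
      intro n
      induction n with
      | zero => simp [asymDist]
      | succ n ih =>
        intro hn
        have hp := hpath n hn
        rw [Finset.sum_range_succ, hgE _ hp]
        have h1 := edge_ge (hθ _ hp).1 (hγ _ hp).1 (hΘub ⟨n, hn, rfl⟩) (hΓub ⟨n, hn, rfl⟩)
          (y (v n)) (y (v (n+1)))
        linarith [ih (by omega), asymDist_triangle hα hβ (y (v 0)) (y (v n)) (y (v (n+1)))]
    have hsub : ∑ t ∈ Finset.range m,
        (gE (v t, v (t+1)) (y (v t)) (y (v (t+1))) - y (v t)) ≤
        ∑ p ∈ ε, (gE p (y p.1) (y p.2) - y p.1 - y p.2 + y (farEnd G k p)) := by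
      have hinj' : Set.InjOn (fun t => (v t, v (t+1))) (Finset.range m) := by
        intro s hs t ht h
        have hs' := Finset.mem_range.1 hs
        have ht' := Finset.mem_range.1 ht
        exact hinj _ (by omega) _ (by omega) (Prod.ext_iff.1 h).1
      calc _ = ∑ p ∈ (Finset.range m).image (fun t => (v t, v (t+1))),
              (gE p (y p.1) (y p.2) - y p.1 - y p.2 + y (farEnd G k p)) := by
            rw [Finset.sum_image hinj']
            exact Finset.sum_congr rfl fun t ht => (hpt t (Finset.mem_range.1 ht) y).symm
        _ ≤ _ := by
            refine Finset.sum_le_sum_of_subset_of_nonneg ?_ fun p hp _ => hnonneg p hp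
            intro p hp
            obtain ⟨t, ht, rfl⟩ := Finset.mem_image.1 hp
            exact hpath t (Finset.mem_range.1 ht)
    have h := htel m le_rfl
    rw [hv0, hvm, hyk, hyl] at h
    linarith
end
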